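/- arXiv:0901.0907 — 2 statements merged into one kernel-verified Lean document; each statement's English description precedes it below -/
import Mathlib

section
/- Let {λ_i}_{i=1}^∞ be a sequence of distinct points in 𝔻². The sequence is interpolating for H^∞(𝔻²) (for every bounded complex sequence {w_i} there is a bounded analytic φ on 𝔻² with φ(λ_i) = w_i for all i) if and only if there exist constants M > 0 and N > 0 such that for every admissible kernel k on 𝔻² with k(λ_i,λ_i) > 0 for all i, the normalized Grammian G^k, with entries G^k_{ij} = k(λ_i,λ_j)/√(k(λ_i,λ_i) k(λ_j,λ_j)), satisfies (1/N) ∑_i |a_i|² ≤ ∑_{i,j} a_i ā_j G^k_{ij} ≤ M ∑_i |a_i|² for every finitely supported complex sequence {a_i}. -/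
open Finset
open scoped ComplexOrder

/-- The open bidisk in `ℂ × ℂ`. -/
def Bidisk : Set (ℂ × ℂ) := {lam : ℂ × ℂ | ‖lam.1‖ < 1 ∧ ‖lam.2‖ < 1}

/-- A kernel on the bidisk is positive semi-definite if all its finite Gram sums over
points of `𝔻²` are nonnegative. -/
def IsPSDKernel (k : ℂ × ℂ → ℂ × ℂ → ℂ) : Prop :=
  ∀ (n : ℕ) (mu : Fin n → ℂ × ℂ), (∀ i, mu i ∈ Bidisk) → ∀ a : Fin n → ℂ,
    0 ≤ ∑ i, ∑ j, a i * starRingEnd ℂ (a j) * k (mu i) (mu j)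

/-- A kernel `k` on `𝔻²` is admissible if `k` and both kernels
`(ζ,λ) ↦ (1 - ζʳ λ̄ʳ) k(ζ,λ)`, `r = 1, 2`, are positive semi-definite. -/
def IsAdmissibleKernel (k : ℂ × ℂ → ℂ × ℂ → ℂ) : Prop :=
  IsPSDKernel k ∧
  IsPSDKernel (fun zeta lam => (1 - zeta.1 * starRingEnd ℂ lam.1) * k zeta lam) ∧
  IsPSDKernel (fun zeta lam => (1 - zeta.2 * starRingEnd ℂ lam.2) * k zeta lam)

/-- Positive semi-definiteness of a function of two variables on an arbitrary set. -/
def PSD {X : Type} (K : X → X → ℂ) : Prop :=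
  ∀ (s : Finset X) (a : X → ℂ), 0 ≤ ∑ i ∈ s, ∑ j ∈ s, a i * starRingEnd ℂ (a j) * K i j

lemma IsPSDKernel.psd {k : ℂ × ℂ → ℂ × ℂ → ℂ} (hk : IsPSDKernel k) {X : Type}
    (mu : X → ℂ × ℂ) (hmu : ∀ x, mu x ∈ Bidisk) : PSD (fun i j => k (mu i) (mu j)) := by
  intro s a
  have h := hk s.card (fun i => mu (s.equivFin.symm i)) (fun i => hmu _)
    (fun i => a (s.equivFin.symm i))
  have e : ∑ i ∈ s, ∑ j ∈ s, a i * starRingEnd ℂ (a j) * k (mu i) (mu j)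
      = ∑ i : s, ∑ j : s, a i * starRingEnd ℂ (a j) * k (mu i) (mu j) := by
    rw [← Finset.sum_coe_sort s]
    refine Finset.sum_congr rfl fun i _ => ?_
    rw [← Finset.sum_coe_sort s]
  rw [e]
  rw [← Equiv.sum_comp s.equivFin.symm]
  simp_rw [← Equiv.sum_comp s.equivFin.symm (fun j : s => _ * starRingEnd ℂ (a j) * _)]
  exact h

lemma PSD.diag_nonneg {X : Type} {K : X → X → ℂ} (hK : PSD K) (i : X) : 0 ≤ K i i := by
  simpa using hK {i} (fun _ => 1)

lemma PSD.herm {X : Type} {K : X → X → ℂ} (hK : PSD K) (i j : X) :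
    starRingEnd ℂ (K i j) = K j i := by
  classical
  by_cases hij : i = j
  · subst hij
    have := hK.diag_nonneg i
    exact Complex.conj_eq_iff_im.2 (Complex.nonneg_iff.1 this).2.symm
  have h1 := hK {i, j} (fun _ => 1)
  have h2 := hK {i, j} (fun x => if x = i then 1 else Complex.I)
  have hii := hK.diag_nonneg i
  have hjj := hK.diag_nonneg j
  have hji : j ≠ i := fun h => hij h.symm
  simp only [Finset.sum_pair hij, hji, if_true, if_false, map_one, Complex.conj_I] at h1 h2
  rw [Complex.nonneg_iff] at h1 h2 hii hjj
  have a1 := h1.2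
  have a2 := h2.2
  simp at a1 a2
  apply Complex.ext
  · simp; linarith [hii.2, hjj.2]
  · simp; linarith [hii.2, hjj.2]

/-- Every positive semi-definite function is a Gram matrix. -/
lemma PSD.gram {X : Type} {K : X → X → ℂ} (hK : PSD K) :
    ∃ (H : Type) (_ : NormedAddCommGroup H) (_ : InnerProductSpace ℂ H) (_ : CompleteSpace H)
      (v : X → H), ∀ i j, inner ℂ (v j) (v i) = K i j := by
  let M : Matrix X X (ℂ →L[ℂ] ℂ) := Matrix.of fun i j => K j i • ContinuousLinearMap.id ℂ ℂ
  have hM : M.PosSemidef := by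
    have key := (RKHS.posSemidef_tfae (K := M)).out 0 2
    rw [key]
    refine ⟨?_, ?_⟩
    · ext i j
      simp [M, Matrix.conjTranspose_apply, ContinuousLinearMap.star_eq_adjoint, hK.herm,
        ContinuousLinearMap.adjoint_id]
    · intro f
      have := hK f.support f
      simp only [Finsupp.sum, M]
      rw [Finset.sum_comm]
      refine (Complex.nonneg_iff.1 (this.trans_eq ?_)).1.trans_eq rfl
      refine Finset.sum_congr rfl fun i _ => Finset.sum_congr rfl fun j _ => ?_
      simp [hK.herm]
      ring
  have : Fact M.PosSemidef := ⟨hM⟩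
  refine ⟨RKHS.OfKernel M, inferInstance, inferInstance, inferInstance,
    fun x => RKHS.kerFun (RKHS.OfKernel M) x (1 : ℂ), fun i j => ?_⟩
  rw [← RKHS.kernel_inner, RKHS.OfKernel.kernel_ofKernel]
  simp [M, ← hK.herm i j]

lemma PSD.gram_fin {X : Type} [Finite X] {K : X → X → ℂ} (hK : PSD K) :
    ∃ (H : Type) (_ : NormedAddCommGroup H) (_ : InnerProductSpace ℂ H)
      (_ : FiniteDimensional ℂ H)
      (v : X → H), ∀ i j, inner ℂ (v j) (v i) = K i j := by
  obtain ⟨H, _, _, _, v, hv⟩ := hK.gram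
  refine ⟨Submodule.span ℂ (Set.range v), inferInstance, inferInstance,
    FiniteDimensional.span_of_finite ℂ (Set.finite_range v),
    fun x => ⟨v x, Submodule.subset_span ⟨x, rfl⟩⟩, fun i j => ?_⟩
  simp [hv]

lemma normsq_sum {H : Type*} [NormedAddCommGroup H] [InnerProductSpace ℂ H] {X : Type*}
    (v : X → H) (s : Finset X) (a : X → ℂ) :
    ((‖∑ i ∈ s, a i • v i‖ ^ 2 : ℝ) : ℂ) =
      ∑ i ∈ s, ∑ j ∈ s, a i * starRingEnd ℂ (a j) * inner ℂ (v j) (v i) := by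
  have := inner_self_eq_norm_sq_to_K (𝕜 := ℂ) (∑ i ∈ s, a i • v i)
  simp only [Complex.coe_algebraMap] at this
  push_cast
  rw [← this, inner_sum]
  refine Finset.sum_congr rfl fun i _ => ?_
  rw [sum_inner]
  refine Finset.sum_congr rfl fun j _ => ?_
  rw [inner_smul_left, inner_smul_right]; ring

lemma psd_of_gram {H : Type*} [NormedAddCommGroup H] [InnerProductSpace ℂ H] {X : Type}
    (v : X → H) : PSD (fun i j => inner ℂ (v j) (v i)) := by
  intro s a
  rw [← normsq_sum]
  exact_mod_cast sq_nonneg (‖∑ i ∈ s, a i • v i‖)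


lemma norm_eq_of_inner_eq {E : Type*} [NormedAddCommGroup E] [InnerProductSpace ℂ E] {X : Type*}
    (x y : X → E) (h : ∀ i j, inner ℂ (x i) (x j) = inner ℂ (y i) (y j)) (f : X →₀ ℂ) :
    ‖Finsupp.linearCombination ℂ y f‖ = ‖Finsupp.linearCombination ℂ x f‖ := by
  have h1 := normsq_sum x f.support f
  have h2 := normsq_sum y f.support f
  simp only [h] at h1
  rw [← h2] at h1
  have h3 : ‖∑ i ∈ f.support, f i • x i‖ ^ 2 = ‖∑ i ∈ f.support, f i • y i‖ ^ 2 := by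
    exact_mod_cast h1
  rw [Finsupp.linearCombination_apply, Finsupp.linearCombination_apply]
  exact ((sq_eq_sq₀ (norm_nonneg _) (norm_nonneg _)).1 h3).symm

lemma exists_contraction {E : Type*} [NormedAddCommGroup E] [InnerProductSpace ℂ E]
    [CompleteSpace E] {X : Type*}
    (x y : X → E) (h : ∀ i j, inner ℂ (x i) (x j) = inner ℂ (y i) (y j)) :
    ∃ T : E →L[ℂ] E, (∀ v, ‖T v‖ ≤ ‖v‖) ∧ ∀ i, T (x i) = y i := by
  set P := Finsupp.linearCombination ℂ x
  set Q := Finsupp.linearCombination ℂ y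
  set S := (LinearMap.range P).topologicalClosure
  have hPS : ∀ f, P f ∈ S := fun f => Submodule.le_topologicalClosure _ ⟨f, rfl⟩
  let e : (X →₀ ℂ) →ₗ[ℂ] S := P.codRestrict S hPS
  have hd : DenseRange e := by
    intro s
    have hs : (s : E) ∈ closure (Set.range P) := by
      have := s.2
      rw [← SetLike.mem_coe, Submodule.topologicalClosure_coe] at this
      exact this
    rw [Topology.IsEmbedding.subtypeVal.closure_eq_preimage_closure_image, Set.mem_preimage,
      ← Set.range_comp]
    exact hs
  have hn : ∀ f, ‖Q f‖ ≤ 1 * ‖e f‖ := fun f => by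
    rw [one_mul]; exact (norm_eq_of_inner_eq x y h f).le
  have hcl : IsClosed (S : Set E) := Submodule.isClosed_topologicalClosure _
  have : CompleteSpace S := hcl.completeSpace_coe
  refine ⟨(Q.extendOfNorm e).comp S.orthogonalProjectionOnto, fun v => ?_, fun i => ?_⟩
  · calc _ ≤ 1 * ‖S.orthogonalProjectionOnto v‖ := LinearMap.norm_extendOfNorm_apply_le hd 1 hn _
      _ ≤ ‖v‖ := by rw [one_mul]; exact Submodule.norm_orthogonalProjectionOnto_apply_le S v
  · have e1 : P (Finsupp.single i 1) = x i := by simp [P]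
    have e2 : S.orthogonalProjectionOnto (x i) = e (Finsupp.single i 1) := by
      have := S.orthogonalProjectionOnto_mem_subspace_eq_self (e (Finsupp.single i 1))
      rw [← this]
      congr 1
      exact e1.symm
    rw [ContinuousLinearMap.comp_apply, e2, LinearMap.extendOfNorm_eq hd ⟨1, hn⟩]
    simp [Q]

lemma exists_unitary {E : Type*} [NormedAddCommGroup E] [InnerProductSpace ℂ E]
    [FiniteDimensional ℂ E] {X : Type*}
    (x y : X → E) (h : ∀ i j, inner ℂ (x i) (x j) = inner ℂ (y i) (y j)) :
    ∃ T : E ≃ₗᵢ[ℂ] E, ∀ i, T (x i) = y i := by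
  have : CompleteSpace E := FiniteDimensional.complete ℂ E
  obtain ⟨T, hT, hTx⟩ := exists_contraction x y h
  set P := Finsupp.linearCombination ℂ x
  set Q := Finsupp.linearCombination ℂ y
  have hTP : ∀ f, T (P f) = Q f := by
    intro f
    simp only [P, Q, Finsupp.linearCombination_apply, Finsupp.sum, map_sum, map_smul, hTx]
  let L : LinearMap.range P →ₗᵢ[ℂ] E :=
    { toLinearMap := T.toLinearMap.comp (LinearMap.range P).subtype
      norm_map' := by
        rintro ⟨_, f, rfl⟩
        simp only [LinearMap.coe_comp, Submodule.coe_subtype, Function.comp_apply]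
        change ‖T (P f)‖ = ‖P f‖
        rw [hTP]
        exact norm_eq_of_inner_eq x y h f }
  refine ⟨L.extend.toLinearIsometryEquiv rfl, fun i => ?_⟩
  have e1 : P (Finsupp.single i 1) = x i := by simp [P]
  have := L.extend_apply ⟨x i, ⟨_, e1⟩⟩
  simp only [LinearIsometry.coe_toLinearIsometryEquiv]
  rw [this]
  exact hTx i

lemma isOpen_bidisk : IsOpen Bidisk := by
  have h1 : IsOpen {p : ℂ × ℂ | ‖p.1‖ < 1} := isOpen_lt (by fun_prop) continuous_const
  have h2 : IsOpen {p : ℂ × ℂ | ‖p.2‖ < 1} := isOpen_lt (by fun_prop) continuous_const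
  exact h1.inter h2

lemma withLp_toLp_eq {E F : Type*} [NormedAddCommGroup E] [InnerProductSpace ℂ E]
    [NormedAddCommGroup F] [InnerProductSpace ℂ F] (x : E) (y : F) :
    (WithLp.toLp 2 (x, y) : WithLp 2 (E × F)) = WithLp.toLp 2 (x, 0) + WithLp.toLp 2 (0, y) := by
  rw [← WithLp.toLp_add]; simp

lemma withLp_normsq {E F : Type*} [NormedAddCommGroup E] [InnerProductSpace ℂ E]
    [NormedAddCommGroup F] [InnerProductSpace ℂ F] (x : E) (y : F) :
    ‖(WithLp.toLp 2 (x, y) : WithLp 2 (E × F))‖ ^ 2 = ‖x‖ ^ 2 + ‖y‖ ^ 2 :=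
  WithLp.prod_norm_sq_eq_of_L2 _

lemma withLp_inner {E F : Type*} [NormedAddCommGroup E] [InnerProductSpace ℂ E]
    [NormedAddCommGroup F] [InnerProductSpace ℂ F] (x x' : E) (y y' : F) :
    inner ℂ (WithLp.toLp 2 (x, y) : WithLp 2 (E × F)) (WithLp.toLp 2 (x', y')) =
      inner ℂ x x' + inner ℂ y y' :=
  WithLp.prod_inner_apply _ _

/-- Transfer function lemma. -/
lemma transfer {H : Type*} [NormedAddCommGroup H] [InnerProductSpace ℂ H] [CompleteSpace H]
    (lam : ℕ → ℂ × ℂ) (hlam : ∀ i, lam i ∈ Bidisk) (r : ℂ) (w : ℕ → ℂ) (q : ℕ → H)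
    (Z : ℂ × ℂ → H →L[ℂ] H) (hZd : Differentiable ℂ Z)
    (hZn : ∀ z h, ‖Z z h‖ ≤ max ‖z.1‖ ‖z.2‖ * ‖h‖)
    (hq : ∀ i j, r * starRingEnd ℂ r + inner ℂ (Z (lam j) (q j)) (Z (lam i) (q i)) =
      w i * starRingEnd ℂ (w j) + inner ℂ (q j) (q i)) :
    ∃ φ : ℂ × ℂ → ℂ, DifferentiableOn ℂ φ Bidisk ∧
        (∃ Cφ : ℝ, ∀ z ∈ Bidisk, ‖φ z‖ ≤ Cφ) ∧ ∀ i, φ (lam i) = w i := by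
  obtain ⟨T, hT, hTx⟩ := exists_contraction (E := WithLp 2 (ℂ × H))
    (fun i => WithLp.toLp 2 (r, Z (lam i) (q i))) (fun i => WithLp.toLp 2 (w i, q i)) (by
      intro j i
      rw [withLp_inner, withLp_inner]
      simp only [RCLike.inner_apply]
      exact hq i j)
  obtain ⟨ι₁, hι₁⟩ : ∃ f : ℂ →L[ℂ] WithLp 2 (ℂ × H), ∀ x, f x = WithLp.toLp 2 (x, 0) :=
    ⟨(WithLp.prodContinuousLinearEquiv 2 ℂ ℂ H).symm.toContinuousLinearMap ∘L
    (ContinuousLinearMap.inl ℂ ℂ H), fun x => rfl⟩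
  obtain ⟨ι₂, hι₂⟩ : ∃ f : H →L[ℂ] WithLp 2 (ℂ × H), ∀ x, f x = WithLp.toLp 2 (0, x) :=
    ⟨(WithLp.prodContinuousLinearEquiv 2 ℂ ℂ H).symm.toContinuousLinearMap ∘L
    (ContinuousLinearMap.inr ℂ ℂ H), fun x => rfl⟩
  obtain ⟨π₁, hπ₁⟩ : ∃ f : WithLp 2 (ℂ × H) →L[ℂ] ℂ, ∀ x, f x = x.fst :=
    ⟨(ContinuousLinearMap.fst ℂ ℂ H) ∘L
    (WithLp.prodContinuousLinearEquiv 2 ℂ ℂ H).toContinuousLinearMap, fun x => rfl⟩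
  obtain ⟨π₂, hπ₂⟩ : ∃ f : WithLp 2 (ℂ × H) →L[ℂ] H, ∀ x, f x = x.snd :=
    ⟨(ContinuousLinearMap.snd ℂ ℂ H) ∘L
    (WithLp.prodContinuousLinearEquiv 2 ℂ ℂ H).toContinuousLinearMap, fun x => rfl⟩
  obtain ⟨D, hD⟩ : ∃ D : H →L[ℂ] H, ∀ h, D h = π₂ (T (ι₂ h)) := ⟨π₂ ∘L T ∘L ι₂, fun _ => rfl⟩
  have hsplit : ∀ (s : ℂ) (h : H), (WithLp.toLp 2 (s, h) : WithLp 2 (ℂ × H)) = ι₁ s + ι₂ h := by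
    intro s h
    rw [withLp_toLp_eq, hι₁, hι₂]
  have hDn : ∀ h, ‖D h‖ ≤ ‖h‖ := by
    intro h
    have h1 := hT (ι₂ h)
    have h2 : ‖ι₂ h‖ = ‖h‖ := by
      rw [← sq_eq_sq₀ (norm_nonneg _) (norm_nonneg _), hι₂, withLp_normsq]; simp
    have h3 : ‖D h‖ ≤ ‖T (ι₂ h)‖ := by
      apply le_of_sq_le_sq _ (norm_nonneg _)
      rw [WithLp.prod_norm_sq_eq_of_L2 (T (ι₂ h)), hD, hπ₂]
      nlinarith [sq_nonneg ‖(T (ι₂ h)).fst‖]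
    linarith
  have hunit : ∀ z ∈ Bidisk, IsUnit (1 - D * Z z) := by
    intro z hz
    have hm : max ‖z.1‖ ‖z.2‖ < 1 := max_lt hz.1 hz.2
    have hle : ‖D * Z z‖ ≤ max ‖z.1‖ ‖z.2‖ := by
      refine ContinuousLinearMap.opNorm_le_bound _ (by positivity) fun h => ?_
      exact (hDn _).trans (hZn z h)
    exact (Units.oneSub (D * Z z) (hle.trans_lt hm)).isUnit
  obtain ⟨p, hp⟩ : ∃ p, p = π₂ (T (ι₁ r)) := ⟨_, rfl⟩
  let U : ℂ × ℂ → H := fun z => Ring.inverse (1 - D * Z z) p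
  let φ : ℂ × ℂ → ℂ := fun z => π₁ (T (ι₁ r)) + π₁ (T (ι₂ (Z z (U z))))
  have happ : ∀ z h, (1 - D * Z z) h = h - D (Z z h) := fun z h => rfl
  have hU : ∀ z ∈ Bidisk, U z = p + D (Z z (U z)) := by
    intro z hz
    have := Ring.mul_inverse_cancel _ (hunit z hz)
    have h2 : (1 - D * Z z) (U z) = p := congrArg (fun L : H →L[ℂ] H => L p) this
    rw [happ] at h2
    rw [← h2]; abel
  have hTU : ∀ z ∈ Bidisk, T (WithLp.toLp 2 (r, Z z (U z))) = WithLp.toLp 2 (φ z, U z) := by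
    intro z hz
    have e1 : π₁ (T (WithLp.toLp 2 (r, Z z (U z)))) = φ z := by
      rw [hsplit, map_add, map_add]
    have e2 : π₂ (T (WithLp.toLp 2 (r, Z z (U z)))) = U z := by
      rw [hsplit, map_add, map_add, ← hp, ← hD]; exact (hU z hz).symm
    rw [hπ₁] at e1
    rw [hπ₂] at e2
    have key : ∀ (x : WithLp 2 (ℂ × H)) (a : ℂ) (b : H), x.fst = a → x.snd = b →
        x = WithLp.toLp 2 (a, b) := by
      rintro x _ _ rfl rfl; rfl
    exact key _ _ _ e1 e2
  have hUq : ∀ i, U (lam i) = q i := by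
    intro i
    have hx : T (ι₁ r + ι₂ (Z (lam i) (q i))) = WithLp.toLp 2 (w i, q i) := by
      rw [← hsplit]; exact hTx i
    have h2 : p + D (Z (lam i) (q i)) = q i := by
      have := congrArg π₂ hx
      rw [map_add, map_add, ← hp, ← hD, hπ₂] at this
      exact this
    have h3 : (1 - D * Z (lam i)) (q i) = p := by
      rw [happ, sub_eq_iff_eq_add]; exact h2.symm
    have := Ring.inverse_mul_cancel _ (hunit _ (hlam i))
    have h4 := congrArg (fun L : H →L[ℂ] H => L (q i)) this
    have h5 : Ring.inverse (1 - D * Z (lam i)) ((1 - D * Z (lam i)) (q i)) = q i := h4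
    rw [h3] at h5
    exact h5
  refine ⟨φ, ?_, ⟨‖r‖, ?_⟩, ?_⟩
  · intro z hz
    have h1 : DifferentiableAt ℂ (fun z => Ring.inverse (1 - D * Z z)) z := by
      have := (differentiableAt_inverse (𝕜 := ℂ) (hunit z hz))
      refine DifferentiableAt.comp (f := fun z => 1 - D * Z z) z this ?_
      exact (differentiableAt_const _).sub ((hZd z).const_mul D)
    have h2 : DifferentiableAt ℂ U z := by
      simp only [U]; exact h1.clm_apply (differentiableAt_const _)
    have h3 : DifferentiableAt ℂ (fun z => Z z (U z)) z := (hZd z).clm_apply h2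
    have h4 : DifferentiableAt ℂ φ z := by
      simp only [φ]
      fun_prop
    exact h4.differentiableWithinAt
  · intro z hz
    have h1 := hT (WithLp.toLp 2 (r, Z z (U z)))
    rw [hTU z hz] at h1
    have h2 := pow_le_pow_left₀ (norm_nonneg _) h1 2
    rw [withLp_normsq, withLp_normsq] at h2
    have h3 : ‖Z z (U z)‖ ≤ ‖U z‖ := (hZn z _).trans (by
      have : max ‖z.1‖ ‖z.2‖ ≤ 1 := (max_lt hz.1 hz.2).le
      nlinarith [norm_nonneg (U z)])
    have h5 := pow_le_pow_left₀ (norm_nonneg _) h3 2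
    apply le_of_sq_le_sq _ (norm_nonneg _)
    linarith
  · intro i
    have h1 := hTU _ (hlam i)
    have h2 : T (WithLp.toLp 2 (r, Z (lam i) (q i))) = WithLp.toLp 2 (w i, q i) := hTx i
    rw [hUq, h2] at h1
    have := congrArg π₁ h1
    rw [hπ₁, hπ₁] at this
    exact this.symm

/-- Lurking isometry / transfer function realization. -/
lemma realization (lam : ℕ → ℂ × ℂ) (hlam : ∀ i, lam i ∈ Bidisk) (c : ℝ) (hc : 0 ≤ c)
    (w : ℕ → ℂ) (A B : ℕ → ℕ → ℂ) (hA : PSD A) (hB : PSD B)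
    (hAB : ∀ i j, (c : ℂ) - w i * starRingEnd ℂ (w j) =
      (1 - (lam i).1 * starRingEnd ℂ (lam j).1) * A i j +
      (1 - (lam i).2 * starRingEnd ℂ (lam j).2) * B i j) :
    ∃ φ : ℂ × ℂ → ℂ, DifferentiableOn ℂ φ Bidisk ∧
        (∃ Cφ : ℝ, ∀ z ∈ Bidisk, ‖φ z‖ ≤ Cφ) ∧ ∀ i, φ (lam i) = w i := by
  obtain ⟨H₁, _, _, _, u, hu⟩ := hA.gram
  obtain ⟨H₂, _, _, _, v, hv⟩ := hB.gram
  have hr : (Real.sqrt c : ℂ) * starRingEnd ℂ (Real.sqrt c : ℂ) = c := by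
    simp only [Complex.conj_ofReal]
    exact_mod_cast Real.mul_self_sqrt hc
  obtain ⟨P₁, hP₁⟩ : ∃ f : WithLp 2 (H₁ × H₂) →L[ℂ] WithLp 2 (H₁ × H₂),
      ∀ h, f h = WithLp.toLp 2 (h.fst, 0) :=
    ⟨(WithLp.prodContinuousLinearEquiv 2 ℂ H₁ H₂).symm.toContinuousLinearMap ∘L
    (ContinuousLinearMap.inl ℂ H₁ H₂) ∘L (ContinuousLinearMap.fst ℂ H₁ H₂) ∘L
    (WithLp.prodContinuousLinearEquiv 2 ℂ H₁ H₂).toContinuousLinearMap, fun _ => rfl⟩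
  obtain ⟨P₂, hP₂⟩ : ∃ f : WithLp 2 (H₁ × H₂) →L[ℂ] WithLp 2 (H₁ × H₂),
      ∀ h, f h = WithLp.toLp 2 (0, h.snd) :=
    ⟨(WithLp.prodContinuousLinearEquiv 2 ℂ H₁ H₂).symm.toContinuousLinearMap ∘L
    (ContinuousLinearMap.inr ℂ H₁ H₂) ∘L (ContinuousLinearMap.snd ℂ H₁ H₂) ∘L
    (WithLp.prodContinuousLinearEquiv 2 ℂ H₁ H₂).toContinuousLinearMap, fun _ => rfl⟩
  have hZ : ∀ (z : ℂ × ℂ) h, (z.1 • P₁ + z.2 • P₂) h =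
      WithLp.toLp 2 (z.1 • h.fst, z.2 • h.snd) := by
    intro z h
    change z.1 • P₁ h + z.2 • P₂ h = _
    rw [hP₁, hP₂, withLp_toLp_eq (z.1 • h.fst), ← WithLp.toLp_smul, ← WithLp.toLp_smul]
    simp
  refine transfer lam hlam (Real.sqrt c) w (fun i => WithLp.toLp 2 (u i, v i))
    (fun z => z.1 • P₁ + z.2 • P₂) (by fun_prop) ?_ ?_
  · intro z h
    apply le_of_sq_le_sq _ (by positivity)
    rw [hZ, withLp_normsq, mul_pow, WithLp.prod_norm_sq_eq_of_L2 h]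
    simp only [norm_smul, mul_pow, mul_add]
    gcongr
    · exact le_max_left _ _
    · exact le_max_right _ _
  · intro i j
    have := hAB i j
    have hZ' : ∀ (z : ℂ × ℂ) a b, (z.1 • P₁ + z.2 • P₂) (WithLp.toLp 2 (a, b)) =
      WithLp.toLp 2 (z.1 • a, z.2 • b) := fun z a b => hZ z _
    rw [hZ', hZ', withLp_inner, withLp_inner, hr]
    simp only [inner_smul_left, inner_smul_right, hu, hv]
    linear_combination this


lemma psd_of_univ {X : Type} [Fintype X] {K : X → X → ℂ}
    (h : ∀ a : X → ℂ, 0 ≤ ∑ i, ∑ j, a i * starRingEnd ℂ (a j) * K i j) : PSD K := by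
  classical
  intro s a
  have := h (fun i => if i ∈ s then a i else 0)
  refine this.trans_eq ?_
  rw [← Finset.sum_subset (Finset.subset_univ s)]
  · refine Finset.sum_congr rfl fun i hi => ?_
    rw [← Finset.sum_subset (Finset.subset_univ s)]
    · refine Finset.sum_congr rfl fun j hj => ?_
      simp [hi, hj]
    · intro j _ hj; simp [hj]
  · intro i _ hi; simp [hi]

lemma PSD.norm_le {X : Type} {K : X → X → ℂ} (hK : PSD K) (i j : X) :
    ‖K i j‖ ≤ (K i i).re + (K j j).re := by
  obtain ⟨H, _, _, _, v, hv⟩ := hK.gram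
  have e : ∀ i, (K i i).re = ‖v i‖ ^ 2 := by
    intro i
    rw [← hv, inner_self_eq_norm_sq_to_K]
    simp [← Complex.ofReal_pow]
  rw [e, e, ← hv]
  have := norm_inner_le_norm (𝕜 := ℂ) (v j) (v i)
  nlinarith [sq_nonneg (‖v i‖ - ‖v j‖), sq_nonneg (‖v i‖ + ‖v j‖)]

lemma isClosed_psd {X : Type} : IsClosed {K : X → X → ℂ | PSD K} := by
  have : {K : X → X → ℂ | PSD K} = ⋂ (s : Finset X) (a : X → ℂ),
      {K | 0 ≤ ∑ i ∈ s, ∑ j ∈ s, a i * starRingEnd ℂ (a j) * K i j} := by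
    ext K; simp [PSD]
  rw [this]
  refine isClosed_iInter fun s => isClosed_iInter fun a => isClosed_le continuous_const ?_
  fun_prop

lemma PSD.add {X : Type} {A B : X → X → ℂ} (hA : PSD A) (hB : PSD B) : PSD (A + B) := by
  intro s a
  refine (add_nonneg (hA s a) (hB s a)).trans_eq ?_
  simp only [← Finset.sum_add_distrib, Pi.add_apply, mul_add]

lemma PSD.smul {X : Type} {A : X → X → ℂ} (hA : PSD A) {t : ℝ} (ht : 0 ≤ t) : PSD (t • A) := by
  intro s a
  refine (mul_nonneg (Complex.zero_le_real.2 ht) (hA s a)).trans_eq ?_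
  simp only [Finset.mul_sum, Pi.smul_apply, Complex.real_smul]
  refine Finset.sum_congr rfl fun i _ => Finset.sum_congr rfl fun j _ => ?_
  ring

lemma psd_zero {X : Type} : PSD (0 : X → X → ℂ) := by
  intro s a; simp

lemma psd_rank_one {X : Type} (a : X → ℂ) : PSD (fun i j => a i * starRingEnd ℂ (a j)) := by
  have := psd_of_gram (H := ℂ) a
  simpa [RCLike.inner_apply] using this

/-- Separation of a hermitian matrix from a closed convex cone of hermitian matrices. -/
lemma exists_dual {X : Type} [Fintype X] (S : Set (X → X → ℂ)) (hconv : Convex ℝ S)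
    (hcl : IsClosed S) (hcone : ∀ x ∈ S, ∀ t : ℝ, 0 ≤ t → t • x ∈ S) (h0 : 0 ∈ S)
    (hherm : ∀ x ∈ S, ∀ i j, starRingEnd ℂ (x i j) = x j i)
    (Γ : X → X → ℂ) (hΓ : ∀ i j, starRingEnd ℂ (Γ i j) = Γ j i) (hΓS : Γ ∉ S) :
    ∃ K : X → X → ℂ, (∀ x ∈ S, 0 ≤ ∑ i, ∑ j, x i j * K i j) ∧
      ∑ i, ∑ j, Γ i j * K i j < 0 := by
  classical
  obtain ⟨f, u, hu1, hu2⟩ := RCLike.geometric_hahn_banach_point_closed (𝕜 := ℂ) hconv hcl hΓS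
  have hu0 : u < 0 := by simpa using hu2 0 h0
  have hfS : ∀ x ∈ S, 0 ≤ (f x).re := by
    intro x hx
    by_contra! hneg
    have h1 := hu2 _ (hcone x hx (u / (f x).re) (div_nonneg_of_nonpos hu0.le hneg.le))
    have h2 : f ((u / (f x).re) • x) = (u / (f x).re) • f x := by
      rw [← Complex.coe_smul, map_smul, Complex.coe_smul]
    rw [h2] at h1
    simp only [RCLike.re_to_complex, Complex.real_smul, Complex.re_ofReal_mul] at h1
    rw [div_mul_cancel₀ _ hneg.ne] at h1
    exact lt_irrefl _ h1
  have hfx : ∀ x, f x = ∑ i, ∑ j, x i j * f (Pi.single i (Pi.single j 1)) := by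
    intro x
    have : x = ∑ i, ∑ j, x i j • (Pi.single i (Pi.single j 1) : X → X → ℂ) := by
      ext i j
      simp only [Finset.sum_apply, Pi.smul_apply, smul_eq_mul, Pi.single_apply]
      rw [Finset.sum_eq_single i, Finset.sum_eq_single j]
      · simp
      · intro b _ hb; simp [Pi.single_apply, hb.symm]
      · simp
      · intro b _ hb; simp [hb.symm]
      · simp
    conv_lhs => rw [this]
    simp only [map_sum, map_smul, smul_eq_mul]
  let K : X → X → ℂ := fun i j => (f (Pi.single i (Pi.single j 1)) +
    starRingEnd ℂ (f (Pi.single j (Pi.single i 1)))) / 2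
  have hK : ∀ x : X → X → ℂ, (∀ i j, starRingEnd ℂ (x i j) = x j i) →
      ∑ i, ∑ j, x i j * K i j = ((f x).re : ℂ) := by
    intro x hx
    rw [Complex.re_eq_add_conj, hfx x]
    have e2 : starRingEnd ℂ (∑ i, ∑ j, x i j * f (Pi.single i (Pi.single j 1))) =
        ∑ i, ∑ j, x i j * starRingEnd ℂ (f (Pi.single j (Pi.single i 1))) := by
      simp only [map_sum, map_mul, hx]
      rw [Finset.sum_comm]
    rw [e2, ← Finset.sum_add_distrib, Finset.sum_div]
    refine Finset.sum_congr rfl fun i _ => ?_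
    rw [← Finset.sum_add_distrib, Finset.sum_div]
    refine Finset.sum_congr rfl fun j _ => ?_
    simp only [K]; ring
  refine ⟨K, fun x hx => ?_, ?_⟩
  · rw [hK x (hherm x hx)]
    exact_mod_cast hfS x hx
  · rw [hK Γ hΓ]
    have : (f Γ).re < 0 := lt_trans hu1 hu0
    exact_mod_cast this

/-- The Agler cone of a finite family of points. -/
def aglerCone {X : Type} (l : X → ℂ × ℂ) : Set (X → X → ℂ) :=
  {Y | ∃ A B : X → X → ℂ, PSD A ∧ PSD B ∧ ∀ i j, Y i j =
    (1 - (l i).1 * starRingEnd ℂ (l j).1) * A i j + (1 - (l i).2 * starRingEnd ℂ (l j).2) * B i j}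

lemma aglerCone_diag {X : Type} {l : X → ℂ × ℂ} (hl : ∀ i, l i ∈ Bidisk) {A B : X → X → ℂ}
    (hA : PSD A) (hB : PSD B) {y : ℂ} (i : X) (h : y =
      (1 - (l i).1 * starRingEnd ℂ (l i).1) * A i i +
      (1 - (l i).2 * starRingEnd ℂ (l i).2) * B i i) :
    (A i i).re ≤ y.re / (1 - ‖(l i).1‖ ^ 2) ∧ (B i i).re ≤ y.re / (1 - ‖(l i).2‖ ^ 2) := by
  have hA' := Complex.nonneg_iff.1 (hA.diag_nonneg i)
  have hB' := Complex.nonneg_iff.1 (hB.diag_nonneg i)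
  have h1 : 0 < 1 - ‖(l i).1‖ ^ 2 := by
    have := (hl i).1; nlinarith [norm_nonneg (l i).1]
  have h2 : 0 < 1 - ‖(l i).2‖ ^ 2 := by
    have := (hl i).2; nlinarith [norm_nonneg (l i).2]
  have e : y.re = (1 - ‖(l i).1‖ ^ 2) * (A i i).re + (1 - ‖(l i).2‖ ^ 2) * (B i i).re := by
    have e' : ∀ z : ℂ, 1 - z * starRingEnd ℂ z = ((1 - ‖z‖ ^ 2 : ℝ) : ℂ) := by
      intro z; rw [Complex.mul_conj, Complex.normSq_eq_norm_sq]; push_cast; ring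
    rw [h, e', e', Complex.add_re, Complex.re_ofReal_mul, Complex.re_ofReal_mul]
  constructor
  · rw [le_div_iff₀ h1, e]; nlinarith [mul_nonneg h2.le hB'.1]
  · rw [le_div_iff₀ h2, e]; nlinarith [mul_nonneg h1.le hA'.1]

lemma isClosed_aglerCone {X : Type} [Fintype X] {l : X → ℂ × ℂ} (hl : ∀ i, l i ∈ Bidisk) :
    IsClosed (aglerCone l) := by
  rw [← isSeqClosed_iff_isClosed]
  intro Y Y0 hY hlim
  choose A B hA hB hAB using hY
  obtain ⟨R, hR⟩ := (Metric.isBounded_range_of_tendsto _ hlim).exists_norm_le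
  have hYn : ∀ n i, ((Y n i i).re) ≤ R := fun n i =>
    (Complex.re_le_norm _).trans <| ((norm_le_pi_norm (Y n i) i).trans
      (norm_le_pi_norm (Y n) i)).trans (hR _ ⟨n, rfl⟩)
  have hR0 : 0 ≤ R := (norm_nonneg _).trans (hR _ ⟨0, rfl⟩)
  have h1 : ∀ i, 0 < 1 - ‖(l i).1‖ ^ 2 := fun i => by
    have := (hl i).1; nlinarith [norm_nonneg (l i).1]
  have h2 : ∀ i, 0 < 1 - ‖(l i).2‖ ^ 2 := fun i => by
    have := (hl i).2; nlinarith [norm_nonneg (l i).2]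
  obtain ⟨R1, hR1⟩ : ∃ R1 : ℝ, ∀ i, R / (1 - ‖(l i).1‖ ^ 2) ≤ R1 ∧ R / (1 - ‖(l i).2‖ ^ 2) ≤ R1 := by
    refine ⟨∑ i, (R / (1 - ‖(l i).1‖ ^ 2) + R / (1 - ‖(l i).2‖ ^ 2)), fun i => ?_⟩
    have := Finset.single_le_sum (f := fun i => R / (1 - ‖(l i).1‖ ^ 2) + R / (1 - ‖(l i).2‖ ^ 2))
      (fun i _ => add_nonneg (div_nonneg hR0 (h1 i).le) (div_nonneg hR0 (h2 i).le)) (Finset.mem_univ i)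
    have a1 := div_nonneg hR0 (h1 i).le
    have a2 := div_nonneg hR0 (h2 i).le
    constructor <;> linarith
  have hd : ∀ n i, (A n i i).re ≤ R1 ∧ (B n i i).re ≤ R1 := by
    intro n i
    have := aglerCone_diag hl (hA n) (hB n) i (hAB n i i)
    refine ⟨this.1.trans (le_trans ?_ (hR1 i).1), this.2.trans (le_trans ?_ (hR1 i).2)⟩
    · gcongr
      · exact (h1 i).le
      · exact hYn n i
    · gcongr
      · exact (h2 i).le
      · exact hYn n i
  have hmem : ∀ n, (A n, B n) ∈ Metric.closedBall (0 : (X → X → ℂ) × (X → X → ℂ)) (2 * |R1|) := by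
    intro n
    rw [mem_closedBall_zero_iff, norm_prod_le_iff]
    have := le_abs_self R1
    constructor
    · rw [pi_norm_le_iff_of_nonneg (by positivity)]; intro i
      rw [pi_norm_le_iff_of_nonneg (by positivity)]; intro j
      have := (hA n).norm_le i j
      linarith [(hd n i).1, (hd n j).1]
    · rw [pi_norm_le_iff_of_nonneg (by positivity)]; intro i
      rw [pi_norm_le_iff_of_nonneg (by positivity)]; intro j
      have := (hB n).norm_le i j
      linarith [(hd n i).2, (hd n j).2]
  obtain ⟨⟨A0, B0⟩, -, φ, hφ, hconv⟩ :=
    tendsto_subseq_of_bounded Metric.isBounded_closedBall hmem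
  rw [Prod.tendsto_iff] at hconv
  refine ⟨A0, B0, isClosed_psd.mem_of_tendsto hconv.1 (.of_forall fun n => hA _),
    isClosed_psd.mem_of_tendsto hconv.2 (.of_forall fun n => hB _), fun i j => ?_⟩
  have t1 := ((hlim.comp hφ.tendsto_atTop).apply_nhds i).apply_nhds j
  have t2 := (hconv.1.apply_nhds i).apply_nhds j
  have t3 := (hconv.2.apply_nhds i).apply_nhds j
  refine tendsto_nhds_unique t1 ?_
  refine Filter.Tendsto.congr (fun n => (hAB (φ n) i j).symm) ?_
  exact (t2.const_mul _).add (t3.const_mul _)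


/-- A matrix `K` with `(1 - z zbar) K` positive is itself positive, for `|z| < 1`. -/
lemma psd_of_szego {X : Type} [Fintype X] {K : X → X → ℂ} (z : X → ℂ) (hz : ∀ i, ‖z i‖ < 1)
    (h : PSD (fun i j => (1 - z i * starRingEnd ℂ (z j)) * K i j)) : PSD K := by
  apply psd_of_univ
  intro a
  have step : ∀ m : ℕ, ∑ i, ∑ j, (z i ^ m * a i) * starRingEnd ℂ (z j ^ m * a j) * K i j ≤
      ∑ i, ∑ j, a i * starRingEnd ℂ (a j) * K i j := by
    intro m
    induction m with
    | zero => simp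
    | succ m ih =>
      refine le_trans ?_ ih
      rw [← sub_nonneg]
      refine (h Finset.univ (fun i => z i ^ m * a i)).trans_eq ?_
      rw [← Finset.sum_sub_distrib]
      refine Finset.sum_congr rfl fun i _ => ?_
      rw [← Finset.sum_sub_distrib]
      refine Finset.sum_congr rfl fun j _ => ?_
      simp only [map_mul, map_pow]
      ring
  have hlim : Filter.Tendsto (fun m : ℕ => ∑ i, ∑ j, (z i ^ m * a i) *
      starRingEnd ℂ (z j ^ m * a j) * K i j) Filter.atTop (nhds 0) := by
    have : (0 : ℂ) = ∑ i : X, ∑ j : X, 0 := by simp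
    rw [this]
    refine tendsto_finsetSum _ fun i _ => tendsto_finsetSum _ fun j _ => ?_
    have h1 : Filter.Tendsto (fun m : ℕ => (z i * starRingEnd ℂ (z j)) ^ m) Filter.atTop (nhds 0) := by
      apply tendsto_pow_atTop_nhds_zero_of_norm_lt_one
      rw [norm_mul, RCLike.norm_conj]
      nlinarith [norm_nonneg (z i), norm_nonneg (z j), hz i, hz j]
    have h2 := h1.mul_const (a i * starRingEnd ℂ (a j) * K i j)
    rw [zero_mul] at h2
    refine h2.congr fun m => ?_
    simp only [map_mul, map_pow]
    ring
  exact le_of_tendsto hlim (.of_forall step)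

open Classical in
/-- Extension of a finite matrix to a kernel on the bidisk. -/
noncomputable def extKer {X : Type} [Fintype X] (l : X → ℂ × ℂ) (K : X → X → ℂ) (D : ℂ × ℂ → ℂ) :
    ℂ × ℂ → ℂ × ℂ → ℂ :=
  fun x y => (∑ i, ∑ j, (if x = l i then 1 else 0) * (if y = l j then 1 else 0) * K i j) +
    if x = y then D x else 0

lemma extKer_psd {X : Type} [Fintype X] (l : X → ℂ × ℂ) (K : X → X → ℂ) (D : ℂ × ℂ → ℂ)
    (hK : PSD K) (hD : ∀ z ∈ Bidisk, 0 ≤ D z) : IsPSDKernel (extKer l K D) := by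
  classical
  intro n mu hmu a
  have e : ∑ p, ∑ q, a p * starRingEnd ℂ (a q) * extKer l K D (mu p) (mu q) =
     (∑ i, ∑ j, (∑ p, a p * if mu p = l i then 1 else 0) *
      starRingEnd ℂ (∑ p, a p * if mu p = l j then 1 else 0) * K i j) +
      ∑ t ∈ Finset.univ.image mu, (∑ p, a p * if mu p = t then 1 else 0) *
      starRingEnd ℂ (∑ p, a p * if mu p = t then 1 else 0) * D t := by
    simp only [extKer, mul_add, Finset.sum_add_distrib]
    congr 1
    · have : ∀ p q : Fin n, a p * starRingEnd ℂ (a q) * (∑ i, ∑ j, (if mu p = l i then 1 else 0) *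
          (if mu q = l j then 1 else 0) * K i j) = ∑ i, ∑ j, (a p * if mu p = l i then 1 else 0) *
          (starRingEnd ℂ (a q * if mu q = l j then 1 else 0)) * K i j := by
        intro p q
        rw [Finset.mul_sum]
        refine Finset.sum_congr rfl fun i _ => ?_
        rw [Finset.mul_sum]
        refine Finset.sum_congr rfl fun j _ => ?_
        split_ifs <;> simp
      simp only [this]
      simp_rw [map_sum, Finset.sum_mul_sum, Finset.sum_mul]
      rw [Finset.sum_comm' (t' := Finset.univ) (s' := fun _ => Finset.univ) (by simp)]
      simp_rw [Finset.sum_comm (s := (Finset.univ : Finset (Fin n))) (t := (Finset.univ : Finset X))]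
      exact Finset.sum_congr rfl fun i _ => Finset.sum_congr rfl fun j _ => Finset.sum_comm
    · simp_rw [map_sum, Finset.sum_mul_sum, Finset.sum_mul]
      rw [Finset.sum_comm]
      conv_rhs => rw [Finset.sum_comm]
      rw [Finset.sum_comm]
      refine Finset.sum_congr rfl fun p _ => ?_
      rw [Finset.sum_comm]
      refine Finset.sum_congr rfl fun q _ => ?_
      rw [Finset.sum_eq_single (mu p)]
      · by_cases h : mu p = mu q
        · simp [h]
        · simp [h, Ne.symm h]
      · intro b _ hb
        simp [hb.symm]
      · simp
  rw [e]
  refine add_nonneg (hK _ _) (Finset.sum_nonneg fun t ht => ?_)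
  refine mul_nonneg ?_ ?_
  · rw [Complex.mul_conj]; exact_mod_cast Complex.normSq_nonneg _
  · simp only [Finset.mem_image, Finset.mem_univ, true_and] at ht
    obtain ⟨p, rfl⟩ := ht
    exact hD _ (hmu p)

lemma extKer_mul {X : Type} [Fintype X] (l : X → ℂ × ℂ) (K : X → X → ℂ) (D : ℂ × ℂ → ℂ)
    (g : ℂ × ℂ → ℂ × ℂ → ℂ) :
    (fun x y => g x y * extKer l K D x y) =
      extKer l (fun i j => g (l i) (l j) * K i j) (fun x => g x x * D x) := by
  classical
  ext x y
  simp only [extKer, mul_add, Finset.mul_sum]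
  congr 1
  · refine Finset.sum_congr rfl fun i _ => Finset.sum_congr rfl fun j _ => ?_
    split_ifs with h1 h2
    · subst h1 h2; simp
    all_goals simp
  · split_ifs with h
    · subst h; rfl
    · simp

lemma one_sub_mul_conj_nonneg {z : ℂ} (hz : ‖z‖ < 1) : 0 ≤ 1 - z * starRingEnd ℂ z := by
  rw [Complex.mul_conj, Complex.normSq_eq_norm_sq]
  have : 0 ≤ 1 - ‖z‖ ^ 2 := by nlinarith [norm_nonneg z]
  exact_mod_cast this

lemma extKer_admissible {X : Type} [Fintype X] (l : X → ℂ × ℂ) (hl : ∀ i, l i ∈ Bidisk)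
    (K : X → X → ℂ)
    (h1 : PSD (fun i j => (1 - (l i).1 * starRingEnd ℂ (l j).1) * K i j))
    (h2 : PSD (fun i j => (1 - (l i).2 * starRingEnd ℂ (l j).2) * K i j))
    (e : ℝ) (he : 0 ≤ e) : IsAdmissibleKernel (extKer l K (fun _ => (e : ℂ))) := by
  have he' : (0 : ℂ) ≤ e := by exact_mod_cast he
  refine ⟨extKer_psd _ _ _ (psd_of_szego (fun i => (l i).1) (fun i => (hl i).1) h1)
    fun _ _ => he', ?_, ?_⟩
  · rw [extKer_mul l K _ (fun x y => 1 - x.1 * starRingEnd ℂ y.1)]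
    exact extKer_psd _ _ _ h1 fun z hz => mul_nonneg (one_sub_mul_conj_nonneg hz.1) he'
  · rw [extKer_mul l K _ (fun x y => 1 - x.2 * starRingEnd ℂ y.2)]
    exact extKer_psd _ _ _ h2 fun z hz => mul_nonneg (one_sub_mul_conj_nonneg hz.2) he'

lemma extKer_apply {X : Type} [Fintype X] [DecidableEq X] (l : X → ℂ × ℂ)
    (hl : Function.Injective l)
    (K : X → X → ℂ) (D : ℂ × ℂ → ℂ) (i j : X) :
    extKer l K D (l i) (l j) = K i j + if i = j then D (l i) else 0 := by
  classical
  simp [extKer, hl.eq_iff]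

lemma extKer_diag_pos {X : Type} [Fintype X] (l : X → ℂ × ℂ) (hl : ∀ i, l i ∈ Bidisk)
    (K : X → X → ℂ) (hK : PSD K) (e : ℝ) (he : 0 < e) (x : ℂ × ℂ) (hx : x ∈ Bidisk) :
    0 < extKer l K (fun _ => (e : ℂ)) x x := by
  have h0 := (extKer_psd l K (fun _ => 0) hK (fun _ _ => le_rfl)).psd (X := Unit)
    (fun _ => x) (fun _ => hx)
  have := h0.diag_nonneg ()
  have e1 : extKer l K (fun _ => (e : ℂ)) x x = extKer l K (fun _ => 0) x x + e := by
    simp [extKer]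
  rw [e1]
  have he' : (0 : ℂ) < e := by exact_mod_cast he
  exact add_pos_of_nonneg_of_pos this he'

/-- Pick sufficiency, finite version. -/
lemma finite_pick (lam : ℕ → ℂ × ℂ) (hlam : ∀ i, lam i ∈ Bidisk) (hdist : Function.Injective lam)
    (c : ℝ) (w : ℕ → ℂ)
    (H : ∀ k : ℂ × ℂ → ℂ × ℂ → ℂ, IsAdmissibleKernel k → (∀ i, 0 < k (lam i) (lam i)) →
      ∀ F : Finset ℕ, 0 ≤ ∑ i ∈ F, ∑ j ∈ F, (c - w i * starRingEnd ℂ (w j)) * k (lam i) (lam j))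
    (n : ℕ) : (fun i j : Fin n => (c : ℂ) - w i * starRingEnd ℂ (w j)) ∈
      aglerCone (fun i : Fin n => lam i) := by
  have hl : ∀ i : Fin n, lam i ∈ Bidisk := fun i => hlam i
  by_contra hnot
  obtain ⟨K, hK1, hK2⟩ := exists_dual (aglerCone (fun i : Fin n => lam i)) (by
      rintro x ⟨A, B, hA, hB, hx⟩ y ⟨A', B', hA', hB', hy⟩ s t hs ht _
      refine ⟨s • A + t • A', s • B + t • B', (hA.smul hs).add (hA'.smul ht),
        (hB.smul hs).add (hB'.smul ht), fun i j => ?_⟩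
      simp only [Pi.add_apply, Pi.smul_apply, Complex.real_smul, hx, hy]
      ring) (isClosed_aglerCone hl) (by
      rintro x ⟨A, B, hA, hB, hx⟩ s hs
      refine ⟨s • A, s • B, hA.smul hs, hB.smul hs, fun i j => ?_⟩
      simp only [Pi.smul_apply, Complex.real_smul, hx]
      ring) ⟨0, 0, psd_zero, psd_zero, by simp⟩ (by
      rintro x ⟨A, B, hA, hB, hx⟩ i j
      simp only [hx, map_add, map_mul, map_sub, map_one, hA.herm, hB.herm, Complex.conj_conj]
      ring) _ (by
      intro i j
      simp only [map_mul, map_sub, Complex.conj_conj, Complex.conj_ofReal]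
      ring) hnot
  have h1 : PSD (fun i j : Fin n => (1 - (lam i).1 * starRingEnd ℂ (lam j).1) * K i j) := by
    apply psd_of_univ
    intro a
    refine (hK1 _ ⟨_, 0, psd_rank_one a, psd_zero, fun i j => rfl⟩).trans_eq ?_
    refine Finset.sum_congr rfl fun i _ => Finset.sum_congr rfl fun j _ => ?_
    simp only [Pi.zero_apply]; ring
  have h2 : PSD (fun i j : Fin n => (1 - (lam i).2 * starRingEnd ℂ (lam j).2) * K i j) := by
    apply psd_of_univ
    intro a
    refine (hK1 _ ⟨0, _, psd_zero, psd_rank_one a, fun i j => rfl⟩).trans_eq ?_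
    refine Finset.sum_congr rfl fun i _ => Finset.sum_congr rfl fun j _ => ?_
    simp only [Pi.zero_apply]; ring
  have hK : PSD K := psd_of_szego (fun i => (lam i).1) (fun i => (hl i).1) h1
  have key : ∀ e : ℝ, 0 < e → 0 ≤ (∑ i : Fin n, ∑ j : Fin n, ((c : ℂ) - w i * starRingEnd ℂ (w j)) * K i j)
      + e * ∑ i : Fin n, ((c : ℂ) - w i * starRingEnd ℂ (w i)) := by
    intro e he
    have := H _ (extKer_admissible _ hl K h1 h2 e he.le)
      (fun i => extKer_diag_pos _ hl K hK e he _ (hlam i)) (Finset.range n)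
    refine this.trans_eq ?_
    rw [Finset.sum_range, Finset.mul_sum, ← Finset.sum_add_distrib]
    refine Finset.sum_congr rfl fun i _ => ?_
    rw [Finset.sum_range]
    have hinj : Function.Injective (fun i : Fin n => lam i) :=
      hdist.comp Fin.val_injective
    have e1 : ∀ j : Fin n, extKer (fun i : Fin n => lam i) K (fun _ => (e : ℂ)) (lam i) (lam j) =
      K i j + if i = j then (e : ℂ) else 0 := fun j => extKer_apply _ hinj K _ i j
    simp only [e1, mul_add, Finset.sum_add_distrib, mul_ite, mul_zero, Finset.sum_ite_eq,
      Finset.mem_univ, if_true]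
    ring
  have hlim : Filter.Tendsto (fun e : ℝ => (∑ i : Fin n, ∑ j : Fin n, ((c : ℂ) - w i * starRingEnd ℂ (w j)) * K i j)
      + e * ∑ i : Fin n, ((c : ℂ) - w i * starRingEnd ℂ (w i))) (nhdsWithin 0 (Set.Ioi 0))
      (nhds (∑ i : Fin n, ∑ j : Fin n, ((c : ℂ) - w i * starRingEnd ℂ (w j)) * K i j)) := by
    refine Filter.Tendsto.mono_left ?_ nhdsWithin_le_nhds
    have : Continuous (fun e : ℝ => (∑ i : Fin n, ∑ j : Fin n, ((c : ℂ) - w i * starRingEnd ℂ (w j)) * K i j)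
      + e * ∑ i : Fin n, ((c : ℂ) - w i * starRingEnd ℂ (w i))) := by fun_prop
    have h := this.tendsto 0
    simpa using h
  have := ge_of_tendsto hlim (by
    filter_upwards [self_mem_nhdsWithin] with e he using key e he)
  exact absurd (lt_of_le_of_lt this hK2) (lt_irrefl _)

/-- Pick sufficiency: passage to the infinite sequence by compactness. -/
lemma infinite_pick (lam : ℕ → ℂ × ℂ) (hlam : ∀ i, lam i ∈ Bidisk) (c : ℝ) (hc : 0 ≤ c)
    (w : ℕ → ℂ)
    (H : ∀ n : ℕ, (fun i j : Fin n => (c : ℂ) - w i * starRingEnd ℂ (w j)) ∈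
      aglerCone (fun i : Fin n => lam i)) :
    ∃ φ : ℂ × ℂ → ℂ, DifferentiableOn ℂ φ Bidisk ∧
        (∃ Cφ : ℝ, ∀ z ∈ Bidisk, ‖φ z‖ ≤ Cφ) ∧ ∀ i, φ (lam i) = w i := by
  have h1 : ∀ i, 0 < 1 - ‖(lam i).1‖ ^ 2 := fun i => by
    have := (hlam i).1; nlinarith [norm_nonneg (lam i).1]
  have h2 : ∀ i, 0 < 1 - ‖(lam i).2‖ ^ 2 := fun i => by
    have := (hlam i).2; nlinarith [norm_nonneg (lam i).2]
  let R1 : ℕ → ℝ := fun i => c / (1 - ‖(lam i).1‖ ^ 2)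
  let R2 : ℕ → ℝ := fun i => c / (1 - ‖(lam i).2‖ ^ 2)
  have hR1 : ∀ i, 0 ≤ R1 i := fun i => div_nonneg hc (h1 i).le
  have hR2 : ∀ i, 0 ≤ R2 i := fun i => div_nonneg hc (h2 i).le
  let box : Set ((ℕ → ℕ → ℂ) × (ℕ → ℕ → ℂ)) :=
    (Set.univ.pi fun i => Set.univ.pi fun j => Metric.closedBall 0 (R1 i + R1 j)) ×ˢ
    (Set.univ.pi fun i => Set.univ.pi fun j => Metric.closedBall 0 (R2 i + R2 j))
  have hbox : IsCompact box :=
    (isCompact_univ_pi fun i => isCompact_univ_pi fun j => isCompact_closedBall _ _).prod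
    (isCompact_univ_pi fun i => isCompact_univ_pi fun j => isCompact_closedBall _ _)
  let C : ℕ → Set ((ℕ → ℕ → ℂ) × (ℕ → ℕ → ℂ)) := fun n =>
    box ∩ ({P | PSD P.1} ∩ {P | PSD P.2} ∩ {P | ∀ i j, i < n → j < n →
      (c : ℂ) - w i * starRingEnd ℂ (w j) =
      (1 - (lam i).1 * starRingEnd ℂ (lam j).1) * P.1 i j +
      (1 - (lam i).2 * starRingEnd ℂ (lam j).2) * P.2 i j})
  have hC0 : ∀ n, IsClosed ({P : (ℕ → ℕ → ℂ) × (ℕ → ℕ → ℂ) | PSD P.1} ∩ {P | PSD P.2} ∩ {P | ∀ i j, i < n → j < n →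
      (c : ℂ) - w i * starRingEnd ℂ (w j) =
      (1 - (lam i).1 * starRingEnd ℂ (lam j).1) * P.1 i j +
      (1 - (lam i).2 * starRingEnd ℂ (lam j).2) * P.2 i j}) := by
    intro n
    refine ((isClosed_psd.preimage continuous_fst).inter (isClosed_psd.preimage continuous_snd)).inter ?_
    simp only [Set.setOf_forall]
    refine isClosed_iInter fun i => isClosed_iInter fun j => isClosed_iInter fun _ =>
      isClosed_iInter fun _ => isClosed_eq continuous_const ?_
    fun_prop
  have hne : ∀ n, (C n).Nonempty := by
    intro n
    obtain ⟨A, B, hA, hB, hAB⟩ := H n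
    let ext : (Fin n → Fin n → ℂ) → ℕ → ℕ → ℂ := fun A i j =>
      if h : i < n ∧ j < n then A ⟨i, h.1⟩ ⟨j, h.2⟩ else 0
    have hext : ∀ A, PSD A → PSD (ext A) := by
      intro A hA
      obtain ⟨H, _, _, _, v, hv⟩ := hA.gram
      have : ext A = fun i j => inner ℂ ((fun i => if h : i < n then v ⟨i, h⟩ else 0) j)
          ((fun i => if h : i < n then v ⟨i, h⟩ else 0) i) := by
        ext i j
        simp only [ext]
        by_cases hi : i < n <;> by_cases hj : j < n <;> simp [hi, hj, hv]
      rw [this]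
      exact psd_of_gram _
    have hd : ∀ i : Fin n, (A i i).re ≤ R1 i ∧ (B i i).re ≤ R2 i := by
      intro i
      have := aglerCone_diag (l := fun i : Fin n => lam i) (fun i => hlam i) hA hB i (hAB i i)
      have hle : ((c : ℂ) - w i * starRingEnd ℂ (w i)).re ≤ c := by
        rw [Complex.mul_conj]; simp [Complex.normSq_nonneg]
      refine ⟨this.1.trans ?_, this.2.trans ?_⟩
      · exact div_le_div_of_nonneg_right hle (h1 i).le
      · exact div_le_div_of_nonneg_right hle (h2 i).le
    refine ⟨(ext A, ext B), ?_, ⟨hext A hA, hext B hB⟩, ?_⟩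
    · refine ⟨fun i _ j _ => ?_, fun i _ j _ => ?_⟩
      · rw [mem_closedBall_zero_iff]
        simp only [ext]
        split_ifs with h
        · exact (hA.norm_le _ _).trans (add_le_add (hd ⟨i, h.1⟩).1 (hd ⟨j, h.2⟩).1)
        · rw [norm_zero]; exact add_nonneg (hR1 _) (hR1 _)
      · rw [mem_closedBall_zero_iff]
        simp only [ext]
        split_ifs with h
        · exact (hB.norm_le _ _).trans (add_le_add (hd ⟨i, h.1⟩).2 (hd ⟨j, h.2⟩).2)
        · rw [norm_zero]; exact add_nonneg (hR2 _) (hR2 _)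
    · intro i j hi hj
      have := hAB ⟨i, hi⟩ ⟨j, hj⟩
      simpa [ext, hi, hj] using this
  obtain ⟨⟨A, B⟩, hP⟩ := IsCompact.nonempty_iInter_of_sequence_nonempty_isCompact_isClosed C
    (fun n P hP => ⟨hP.1, hP.2.1, fun i j hi hj => hP.2.2 i j (by omega) (by omega)⟩) hne
    (hbox.inter_right (hC0 0)) (fun n => hbox.isClosed.inter (hC0 n))
  rw [Set.mem_iInter] at hP
  exact realization lam hlam c hc w A B (hP 0).2.1.1 (hP 0).2.1.2
    (fun i j => (hP (max i j + 1)).2.2 i j (by omega) (by omega))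


/-- Normalized Grammian sums as norms. -/
lemma normalized_gram {k : ℂ × ℂ → ℂ × ℂ → ℂ} {lam : ℕ → ℂ × ℂ} {H : Type*}
    [NormedAddCommGroup H] [InnerProductSpace ℂ H] {v : ℕ → H}
    (hv : ∀ i j, inner ℂ (v j) (v i) = k (lam i) (lam j)) (F : Finset ℕ) (a : ℕ → ℂ) :
    ∑ i ∈ F, ∑ j ∈ F, a i * starRingEnd ℂ (a j) *
                (k (lam i) (lam j) /
                  (Real.sqrt ((k (lam i) (lam i)).re * (k (lam j) (lam j)).re) : ℂ)) =
      ((‖∑ i ∈ F, (a i / (‖v i‖ : ℂ)) • v i‖ ^ 2 : ℝ) : ℂ) := by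
  rw [normsq_sum]
  have e : ∀ i, (k (lam i) (lam i)).re = ‖v i‖ ^ 2 := by
    intro i
    rw [← hv, inner_self_eq_norm_sq_to_K]
    simp [← Complex.ofReal_pow]
  refine Finset.sum_congr rfl fun i _ => Finset.sum_congr rfl fun j _ => ?_
  rw [e, e, ← mul_pow, Real.sqrt_sq (by positivity), hv]
  simp only [map_div₀, Complex.conj_ofReal, Complex.ofReal_mul]
  rw [div_mul_div_comm, mul_div_assoc', div_mul_eq_mul_div]

lemma gram_ne_zero {k : ℂ × ℂ → ℂ × ℂ → ℂ} {lam : ℕ → ℂ × ℂ} {H : Type*}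
    [NormedAddCommGroup H] [InnerProductSpace ℂ H] {v : ℕ → H}
    (hv : ∀ i j, inner ℂ (v j) (v i) = k (lam i) (lam j))
    (hk : ∀ i, 0 < k (lam i) (lam i)) (i : ℕ) : ‖v i‖ ≠ 0 := by
  intro h
  have := hk i
  rw [← hv, norm_eq_zero.1 h] at this
  simp at this

lemma backward (lam : ℕ → ℂ × ℂ)
    (hlam : ∀ i, lam i ∈ Bidisk) (hdist : Function.Injective lam)
    (M : ℝ) (hM : 0 < M) (Nc : ℝ) (hN : 0 < Nc)
    (h : ∀ k : ℂ × ℂ → ℂ × ℂ → ℂ, IsAdmissibleKernel k → (∀ i, 0 < k (lam i) (lam i)) →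
        ∀ (F : Finset ℕ) (a : ℕ → ℂ),
          ((((1 / Nc) * ∑ i ∈ F, ‖a i‖ ^ 2 : ℝ) : ℂ) ≤
              ∑ i ∈ F, ∑ j ∈ F, a i * starRingEnd ℂ (a j) *
                (k (lam i) (lam j) /
                  (Real.sqrt ((k (lam i) (lam i)).re * (k (lam j) (lam j)).re) : ℂ))) ∧
          (∑ i ∈ F, ∑ j ∈ F, a i * starRingEnd ℂ (a j) *
              (k (lam i) (lam j) /
                (Real.sqrt ((k (lam i) (lam i)).re * (k (lam j) (lam j)).re) : ℂ)) ≤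
            ((M * ∑ i ∈ F, ‖a i‖ ^ 2 : ℝ) : ℂ)))
    (w : ℕ → ℂ) (hw : ∃ Cw : ℝ, ∀ i, ‖w i‖ ≤ Cw) :
      ∃ φ : ℂ × ℂ → ℂ, DifferentiableOn ℂ φ Bidisk ∧
        (∃ Cφ : ℝ, ∀ z ∈ Bidisk, ‖φ z‖ ≤ Cφ) ∧
        ∀ i, φ (lam i) = w i := by
  obtain ⟨Cw, hCw⟩ := hw
  have hc : 0 ≤ M * Nc * Cw ^ 2 := by positivity
  refine infinite_pick lam hlam (M * Nc * Cw ^ 2) hc w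
    (finite_pick lam hlam hdist _ w fun k hk hpos F => ?_)
  obtain ⟨H, _, _, _, v, hv⟩ := (hk.1.psd lam hlam).gram
  have hv' := hv
  have hne := gram_ne_zero (k := k) (lam := lam) hv hpos
  have key1 := (h k hk hpos F (fun i => (‖v i‖ : ℂ))).1
  have key2 := (h k hk hpos F (fun i => w i * (‖v i‖ : ℂ))).2
  rw [normalized_gram hv] at key1 key2
  have e1 : ∑ i ∈ F, ((‖v i‖ : ℂ) / (‖v i‖ : ℂ)) • v i = ∑ i ∈ F, v i := by
    refine Finset.sum_congr rfl fun i _ => ?_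
    rw [div_self (Complex.ofReal_ne_zero.2 (hne i)), one_smul]
  have e2 : ∑ i ∈ F, ((w i * (‖v i‖ : ℂ)) / (‖v i‖ : ℂ)) • v i = ∑ i ∈ F, w i • v i := by
    refine Finset.sum_congr rfl fun i _ => ?_
    rw [mul_div_cancel_right₀ _ (Complex.ofReal_ne_zero.2 (hne i))]
  rw [e1, Complex.real_le_real] at key1
  rw [e2, Complex.real_le_real] at key2
  have e3 : ∑ i ∈ F, ‖w i * (‖v i‖ : ℂ)‖ ^ 2 ≤ Cw ^ 2 * ∑ i ∈ F, ‖(‖v i‖ : ℂ)‖ ^ 2 := by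
    rw [Finset.mul_sum]
    refine Finset.sum_le_sum fun i _ => ?_
    rw [norm_mul, mul_pow]
    have := hCw i
    gcongr
  have e4 : ∑ i ∈ F, ‖(‖v i‖ : ℂ)‖ ^ 2 ≤ Nc * ‖∑ i ∈ F, v i‖ ^ 2 := by
    rw [one_div, inv_mul_le_iff₀ hN] at key1
    exact key1
  have e5 : ‖∑ i ∈ F, w i • v i‖ ^ 2 ≤ M * Nc * Cw ^ 2 * ‖∑ i ∈ F, v i‖ ^ 2 := by
    calc _ ≤ M * (Cw ^ 2 * (Nc * ‖∑ i ∈ F, v i‖ ^ 2)) := by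
          refine key2.trans ?_
          gcongr
          exact e3.trans (by gcongr)
      _ = _ := by ring
  have f1 := normsq_sum v F (fun _ => 1)
  have f2 := normsq_sum v F w
  simp only [hv, one_smul, map_one, one_mul] at f1 f2
  have : ∑ i ∈ F, ∑ j ∈ F, (((M * Nc * Cw ^ 2 : ℝ) : ℂ) - w i * starRingEnd ℂ (w j)) * k (lam i) (lam j) =
      ((M * Nc * Cw ^ 2 * ‖∑ i ∈ F, v i‖ ^ 2 - ‖∑ i ∈ F, w i • v i‖ ^ 2 : ℝ) : ℂ) := by
    rw [Complex.ofReal_sub, f2, Complex.ofReal_mul _ (‖∑ i ∈ F, v i‖ ^ 2), f1]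
    simp only [sub_mul, Finset.sum_sub_distrib, Finset.mul_sum]
  rw [this]
  exact_mod_cast sub_nonneg.2 e5


lemma root_filter {L : ℕ} (hL : L ≠ 0) {ω : ℂ} (hω : IsPrimitiveRoot ω L) (n : ℕ) (z : ℂ) :
    ∑ k ∈ Finset.range L, ∑ m ∈ Finset.range L, (ω ^ k) ^ n * ((L : ℂ)⁻¹ * (ω⁻¹ ^ k) ^ m) * z ^ m =
      z ^ (n % L) := by
  have hω0 : ω ≠ 0 := hω.ne_zero hL
  have hL' : (L : ℂ) ≠ 0 := Nat.cast_ne_zero.2 hL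
  rw [Finset.sum_comm]
  rw [Finset.sum_eq_single (n % L)]
  · have : ∀ k ∈ Finset.range L, (ω ^ k) ^ n * ((L : ℂ)⁻¹ * (ω⁻¹ ^ k) ^ (n % L)) * z ^ (n % L) =
        (L : ℂ)⁻¹ * z ^ (n % L) := by
      intro k _
      have h1 : (ω ^ k) ^ n * (ω⁻¹ ^ k) ^ (n % L) = 1 := by
        have : (ω ^ k) ^ n = (ω ^ k) ^ (n % L) := by
          exact pow_eq_pow_mod n (by rw [← pow_mul, mul_comm, pow_mul, hω.pow_eq_one, one_pow])
        rw [this, ← mul_pow, ← mul_pow, mul_inv_cancel₀ hω0, one_pow, one_pow]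
      linear_combination ((L : ℂ)⁻¹ * z ^ (n % L)) * h1
    rw [Finset.sum_congr rfl this, Finset.sum_const, Finset.card_range, nsmul_eq_mul,
      mul_inv_cancel_left₀ hL']
  · intro m hm hmn
    have hη : ω ^ (n % L) * ω⁻¹ ^ m ≠ 1 := by
      intro h
      rw [inv_pow, mul_inv_eq_one₀ (pow_ne_zero _ hω0)] at h
      exact hmn (hω.pow_inj (Nat.mod_lt _ (Nat.pos_of_ne_zero hL)) (Finset.mem_range.1 hm) h).symm
    have hsum := geom_sum_eq hη L
    have h1 : (ω ^ (n % L) * ω⁻¹ ^ m) ^ L = 1 := by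
      rw [mul_pow, ← pow_mul, ← pow_mul, mul_comm, mul_comm m, mul_comm _ L, pow_mul, pow_mul, inv_pow, hω.pow_eq_one]
      simp
    rw [h1, sub_self, zero_div] at hsum
    have : ∀ k ∈ Finset.range L, (ω ^ k) ^ n * ((L : ℂ)⁻¹ * (ω⁻¹ ^ k) ^ m) * z ^ m =
        ((L : ℂ)⁻¹ * z ^ m) * (ω ^ (n % L) * ω⁻¹ ^ m) ^ k := by
      intro k _
      have : (ω ^ k) ^ n = (ω ^ (n % L)) ^ k := by
        rw [← pow_eq_pow_mod n hω.pow_eq_one, ← pow_mul, ← pow_mul, mul_comm]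
      rw [this, mul_pow, ← pow_mul, ← pow_mul ω⁻¹, ← pow_mul, mul_comm k m]; ring
    rw [Finset.sum_congr rfl this, ← Finset.mul_sum, hsum, mul_zero]
  · intro h
    exact absurd (Finset.mem_range.2 (Nat.mod_lt _ (Nat.pos_of_ne_zero hL))) h

lemma one_var (s : ℝ) (hs0 : 0 < s) (hs1 : s < 1) (ε : ℝ) (hε : 0 < ε) :
    ∃ (L : ℕ) (x : ℕ → ℂ) (q : ℕ → ℕ → ℂ), (∀ k, ‖x k‖ < 1) ∧
      ∀ (f : ℂ → ℂ) (C : ℝ), DifferentiableOn ℂ f (Metric.ball 0 1) →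
        (∀ z ∈ Metric.ball (0 : ℂ) 1, ‖f z‖ ≤ C) → ∀ z : ℂ, ‖z‖ ≤ 1 →
        ‖f (s ^ 3 * z) - ∑ k ∈ Finset.range L, ∑ m ∈ Finset.range L, f (x k) * q k m * z ^ m‖
          ≤ ε * C := by
  obtain ⟨L, hL⟩ : ∃ L : ℕ, s ^ L < ε * (1 - s) / 2 :=
    exists_pow_lt_of_lt_one (by have : 0 < 1 - s := by linarith
                                positivity) hs1
  obtain ⟨L, hL, hLn⟩ : ∃ L : ℕ, s ^ L < ε * (1 - s) / 2 ∧ L ≠ 0 :=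
    ⟨L + 1, lt_of_le_of_lt (pow_le_pow_of_le_one hs0.le hs1.le (by omega)) hL, by omega⟩
  have hω := Complex.isPrimitiveRoot_exp L hLn
  set ω := Complex.exp (2 * Real.pi * Complex.I / L)
  have hωn : ‖ω‖ = 1 := hω.norm'_eq_one hLn
  have hs3 : s ^ 3 < s := by nlinarith [mul_pos hs0 hs0, mul_pos (mul_pos hs0 hs0) hs0, pow_pos hs0 3, mul_pos hs0 (sub_pos.2 hs1)]
  refine ⟨L, fun k => s ^ 3 * ω ^ k, fun k m => (L : ℂ)⁻¹ * (ω⁻¹ ^ k) ^ m, fun k => ?_, ?_⟩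
  · rw [norm_mul, norm_pow, norm_pow, hωn, one_pow, mul_one, Complex.norm_real, Real.norm_of_nonneg hs0.le]
    linarith
  intro f C hf hC z hz
  have hball : ∀ z : ℂ, ‖z‖ ≤ 1 → (s : ℂ) ^ 3 * z ∈ Metric.ball (0 : ℂ) 1 := by
    intro z hz
    rw [mem_ball_zero_iff, norm_mul, norm_pow, Complex.norm_real, Real.norm_of_nonneg hs0.le]
    nlinarith [norm_nonneg z, pow_pos hs0 3]
  have hC0 : 0 ≤ C := (norm_nonneg _).trans (hC 0 (by simp))
  obtain ⟨c, hc⟩ : ∃ c : ℕ → ℂ, ∀ n, c n = (n.factorial : ℂ)⁻¹ * iteratedDeriv n f 0 := ⟨_, fun _ => rfl⟩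
  have hcn : ∀ n, ‖c n‖ * s ^ n ≤ C := by
    intro n
    have h1 := Complex.norm_iteratedDeriv_le_of_forall_mem_sphere_norm_le (c := 0) (f := f) n hs0
      (C := C) (hf.mono (Metric.closedBall_subset_ball hs1) |>.diffContOnCl_ball (subset_refl _))
      (fun z hz => hC z (by
        rw [mem_sphere_zero_iff_norm] at hz
        rw [mem_ball_zero_iff, hz]; exact hs1))
    rw [hc, norm_mul, norm_inv, Complex.norm_natCast]
    have hn : (0 : ℝ) < n.factorial := by exact_mod_cast Nat.factorial_pos n
    rw [le_div_iff₀ (by positivity)] at h1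
    rw [mul_assoc, inv_mul_le_iff₀ hn]
    exact h1
  have hsum : ∀ z : ℂ, ‖z‖ ≤ 1 → HasSum (fun n => c n * (s : ℂ) ^ (3 * n) * z ^ n) (f (s ^ 3 * z)) := by
    intro z hz
    have := Complex.hasSum_taylorSeries_on_ball hf (hball z hz)
    have hfun : (fun n => c n * (s : ℂ) ^ (3 * n) * z ^ n) = fun n : ℕ =>
        (n.factorial : ℂ)⁻¹ • ((s : ℂ) ^ 3 * z - 0) ^ n • iteratedDeriv n f 0 := by
      funext n
      simp only [hc, smul_eq_mul, sub_zero, mul_pow, ← pow_mul]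
      ring
    rw [hfun]
    exact this
  have h1 := hsum z hz
  have h2 : HasSum (fun n => c n * (s : ℂ) ^ (3 * n) * z ^ (n % L))
      (∑ k ∈ Finset.range L, ∑ m ∈ Finset.range L,
        f (s ^ 3 * ω ^ k) * ((L : ℂ)⁻¹ * (ω⁻¹ ^ k) ^ m) * z ^ m) := by
    have h3 := hasSum_sum (L := .unconditional ℕ) (s := Finset.range L) (f := fun k n => ∑ m ∈ Finset.range L,
      (c n * (s : ℂ) ^ (3 * n) * (ω ^ k) ^ n) * ((L : ℂ)⁻¹ * (ω⁻¹ ^ k) ^ m) * z ^ m)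
      (a := fun k => ∑ m ∈ Finset.range L,
        f (s ^ 3 * ω ^ k) * ((L : ℂ)⁻¹ * (ω⁻¹ ^ k) ^ m) * z ^ m) (fun k _ => by
        refine hasSum_sum fun m _ => ?_
        exact ((hsum (ω ^ k) (by rw [norm_pow, hωn, one_pow])).mul_right _).mul_right _)
    convert h3 using 2 with n
    rw [← root_filter hLn hω n z, Finset.mul_sum]
    refine Finset.sum_congr rfl fun k _ => ?_
    rw [Finset.mul_sum]
    refine Finset.sum_congr rfl fun m _ => ?_
    ring
  have h3 := h1.sub h2
  have hg : HasSum (fun n => 2 * C * s ^ L * s ^ n) (2 * C * s ^ L * (1 - s)⁻¹) :=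
    (hasSum_geometric_of_lt_one hs0.le hs1).mul_left _
  refine (h3.norm_le_of_bounded hg fun n => ?_).trans ?_
  · rcases lt_or_ge n L with hn | hn
    · rw [Nat.mod_eq_of_lt hn, sub_self, norm_zero]; positivity
    · have e1 : ‖z ^ n - z ^ (n % L)‖ ≤ 2 := by
        refine (norm_sub_le _ _).trans ?_
        rw [norm_pow, norm_pow]
        have := pow_le_one₀ (n := n) (norm_nonneg z) hz
        have := pow_le_one₀ (n := n % L) (norm_nonneg z) hz
        linarith
      have e2 : s ^ n ≤ s ^ L := pow_le_pow_of_le_one hs0.le hs1.le hn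
      rw [← mul_sub, norm_mul, norm_mul, norm_pow, Complex.norm_real, Real.norm_of_nonneg hs0.le]
      have e3 : s ^ (3 * n) = s ^ n * s ^ n * s ^ n := by ring
      rw [e3]
      calc _ = (‖c n‖ * s ^ n) * (s ^ n) * s ^ n * ‖z ^ n - z ^ (n % L)‖ := by ring
        _ ≤ C * s ^ L * s ^ n * 2 := by
          gcongr
          exact hcn n
        _ = _ := by ring
  · have h1s : 0 < 1 - s := by linarith
    rw [← div_eq_mul_inv, div_le_iff₀ h1s]
    have := mul_le_mul_of_nonneg_left hL.le (mul_nonneg zero_le_two hC0)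
    nlinarith

lemma two_var (φ : ℂ × ℂ → ℂ) (hφ : DifferentiableOn ℂ φ Bidisk) (C : ℝ)
    (hC : ∀ z ∈ Bidisk, ‖φ z‖ ≤ C) (s : ℝ) (hs0 : 0 < s) (hs1 : s < 1) (ε : ℝ) (hε : 0 < ε) :
    ∃ (N : ℕ) (c : ℕ → ℕ → ℂ), ∀ z₁ z₂ : ℂ, ‖z₁‖ ≤ 1 → ‖z₂‖ ≤ 1 →
      ‖φ (s ^ 3 * z₁, s ^ 3 * z₂) -
        ∑ m ∈ Finset.range N, ∑ n ∈ Finset.range N, c m n * (z₁ ^ m * z₂ ^ n)‖ ≤ ε := by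
  have hC0 : 0 ≤ C := (norm_nonneg _).trans (hC 0 (by simp [Bidisk]))
  have hs3 : ∀ z : ℂ, ‖z‖ ≤ 1 → ‖(s : ℂ) ^ 3 * z‖ < 1 := by
    intro z hz
    rw [norm_mul, norm_pow, Complex.norm_real, Real.norm_of_nonneg hs0.le]
    have : s ^ 3 < 1 := pow_lt_one₀ hs0.le hs1 (by norm_num)
    nlinarith [norm_nonneg z, pow_pos hs0 3]
  set δ := ε / 2 / (C + 1)
  have hδ : 0 < δ := by positivity
  have hδC : δ * C ≤ ε / 2 := by
    simp only [δ]
    rw [div_mul_eq_mul_div, div_le_iff₀ (by positivity)]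
    nlinarith
  obtain ⟨L₁, x, q, hx, h1⟩ := one_var s hs0 hs1 δ hδ
  set S := ∑ k ∈ Finset.range L₁, ∑ m ∈ Finset.range L₁, ‖q k m‖
  have hS : 0 ≤ S := Finset.sum_nonneg fun _ _ => Finset.sum_nonneg fun _ _ => norm_nonneg _
  obtain ⟨L₂, y, p, hy, h2⟩ := one_var s hs0 hs1 (δ / (S + 1)) (by positivity)
  have hd1 : ∀ b : ℂ, ‖b‖ < 1 → DifferentiableOn ℂ (fun z => φ (z, b)) (Metric.ball 0 1) := by
    intro b hb
    refine hφ.comp (by fun_prop) fun z hz => ?_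
    exact ⟨mem_ball_zero_iff.1 hz, hb⟩
  have hd2 : ∀ b : ℂ, ‖b‖ < 1 → DifferentiableOn ℂ (fun z => φ (b, z)) (Metric.ball 0 1) := by
    intro b hb
    refine hφ.comp (by fun_prop) fun z hz => ?_
    exact ⟨hb, mem_ball_zero_iff.1 hz⟩
  let T : ℕ → ℂ → ℂ := fun k z₂ => ∑ l ∈ Finset.range L₂, ∑ n ∈ Finset.range L₂, φ (x k, y l) * p l n * z₂ ^ n
  let c : ℕ → ℕ → ℂ := fun m n => if m < L₁ ∧ n < L₂ then ∑ k ∈ Finset.range L₁, ∑ l ∈ Finset.range L₂,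
    φ (x k, y l) * q k m * p l n else 0
  refine ⟨max L₁ L₂, c, fun z₁ z₂ hz₁ hz₂ => ?_⟩
  have e0 : ∑ m ∈ Finset.range (max L₁ L₂), ∑ n ∈ Finset.range (max L₁ L₂), c m n * (z₁ ^ m * z₂ ^ n) =
      ∑ k ∈ Finset.range L₁, ∑ m ∈ Finset.range L₁, T k z₂ * q k m * z₁ ^ m := by
    have a1 : Finset.range L₁ ⊆ Finset.range (max L₁ L₂) := Finset.range_subset_range.2 (le_max_left _ _)
    have a2 : Finset.range L₂ ⊆ Finset.range (max L₁ L₂) := Finset.range_subset_range.2 (le_max_right _ _)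
    rw [← Finset.sum_subset a1]
    · rw [Finset.sum_comm (s := Finset.range L₁) (t := Finset.range L₁)]
      refine Finset.sum_congr rfl fun m hm => ?_
      rw [← Finset.sum_subset a2]
      · have : ∀ n ∈ Finset.range L₂, c m n * (z₁ ^ m * z₂ ^ n) = ∑ k ∈ Finset.range L₁, ∑ l ∈ Finset.range L₂,
            φ (x k, y l) * q k m * p l n * (z₁ ^ m * z₂ ^ n) := by
          intro n hn
          simp only [c, Finset.mem_range.1 hm, Finset.mem_range.1 hn, and_self, if_true, Finset.sum_mul]
        rw [Finset.sum_congr rfl this, Finset.sum_comm]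
        refine Finset.sum_congr rfl fun k _ => ?_
        rw [Finset.sum_comm]
        simp only [T, Finset.sum_mul]
        refine Finset.sum_congr rfl fun l _ => Finset.sum_congr rfl fun n _ => ?_
        ring
      · intro n _ hn
        simp only [Finset.mem_range] at hn
        simp [c, hn]
    · intro m _ hm
      simp only [Finset.mem_range] at hm
      simp [c, hm]
  rw [e0]
  have k1 := h1 (fun z => φ (z, s ^ 3 * z₂)) C (hd1 _ (hs3 _ hz₂))
    (fun z hz => hC _ ⟨mem_ball_zero_iff.1 hz, hs3 _ hz₂⟩) z₁ hz₁
  have k2 : ∀ k, ‖φ (x k, s ^ 3 * z₂) - T k z₂‖ ≤ δ / (S + 1) * C := fun k =>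
    h2 (fun z => φ (x k, z)) C (hd2 _ (hx k))
    (fun z hz => hC _ ⟨hx k, mem_ball_zero_iff.1 hz⟩) z₂ hz₂
  have k3 : ‖∑ k ∈ Finset.range L₁, ∑ m ∈ Finset.range L₁, φ (x k, s ^ 3 * z₂) * q k m * z₁ ^ m -
      ∑ k ∈ Finset.range L₁, ∑ m ∈ Finset.range L₁, T k z₂ * q k m * z₁ ^ m‖ ≤ δ * C := by
    rw [← Finset.sum_sub_distrib]
    have : ‖∑ k ∈ Finset.range L₁, (∑ m ∈ Finset.range L₁, φ (x k, s ^ 3 * z₂) * q k m * z₁ ^ m -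
        ∑ m ∈ Finset.range L₁, T k z₂ * q k m * z₁ ^ m)‖ ≤
        ∑ k ∈ Finset.range L₁, ∑ m ∈ Finset.range L₁, δ / (S + 1) * C * ‖q k m‖ := by
      refine norm_sum_le_of_le _ fun k _ => ?_
      rw [← Finset.sum_sub_distrib]
      refine norm_sum_le_of_le _ fun m _ => ?_
      rw [← sub_mul, ← sub_mul, norm_mul, norm_mul, norm_pow]
      have a1 := k2 k
      have a2 := pow_le_one₀ (n := m) (norm_nonneg z₁) hz₁
      calc _ ≤ (δ / (S + 1) * C) * ‖q k m‖ * 1 := by gcongr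
        _ = _ := by ring
    refine this.trans ?_
    simp only [← Finset.mul_sum]
    change δ / (S + 1) * C * S ≤ _
    have : δ / (S + 1) * S ≤ δ := by
      rw [div_mul_eq_mul_div, div_le_iff₀ (by positivity)]; nlinarith
    nlinarith
  have := norm_sub_le_norm_sub_add_norm_sub (φ (s ^ 3 * z₁, s ^ 3 * z₂))
    (∑ k ∈ Finset.range L₁, ∑ m ∈ Finset.range L₁, φ (x k, s ^ 3 * z₂) * q k m * z₁ ^ m)
    (∑ k ∈ Finset.range L₁, ∑ m ∈ Finset.range L₁, T k z₂ * q k m * z₁ ^ m)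
  linarith


lemma exists_eig_in {E : Type*} [AddCommGroup E] [Module ℂ E] [FiniteDimensional ℂ E]
    (f : Module.End ℂ E) (V : Submodule ℂ E) (hV : ∀ x ∈ V, f x ∈ V) (hne : V ≠ ⊥) :
    ∃ z : ℂ, ∃ x ∈ V, x ≠ 0 ∧ f x = z • x := by
  have : Nontrivial V := Submodule.nontrivial_iff_ne_bot.2 hne
  obtain ⟨z, hz⟩ := Module.End.exists_eigenvalue (f.restrict hV)
  obtain ⟨x, hx⟩ := hz.exists_hasEigenvector
  refine ⟨z, x, x.2, fun h => hx.2 (Subtype.ext h), ?_⟩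
  have := hx.apply_eq_smul
  exact congrArg Subtype.val this

lemma iso_unitary {E : Type*} [NormedAddCommGroup E] [InnerProductSpace ℂ E]
    [FiniteDimensional ℂ E] [CompleteSpace E] (A : E →ₗᵢ[ℂ] E) :
    A.toContinuousLinearMap ∈ unitary (E →L[ℂ] E) := by
  have h := (Unitary.linearIsometryEquiv.symm (A.toLinearIsometryEquiv rfl)).2
  convert h using 1
  ext x; rfl

lemma iso_pow {E : Type*} [NormedAddCommGroup E] [InnerProductSpace ℂ E]
    (A : E →ₗᵢ[ℂ] E) (m : ℕ) (x : E) : (A.toContinuousLinearMap ^ m) x = A^[m] x := by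
  induction m generalizing x with
  | zero => rfl
  | succ m ih =>
    rw [pow_succ, Function.iterate_succ_apply, ← ih]
    rfl

/-- The functional calculus estimate for a pair of commuting unitary matrices. -/
lemma poly_norm_le {E : Type*} [NormedAddCommGroup E] [InnerProductSpace ℂ E]
    [FiniteDimensional ℂ E] (A₁ A₂ : E →ₗᵢ[ℂ] E) (hcomm : ∀ x, A₁ (A₂ x) = A₂ (A₁ x))
    (N : ℕ) (c : ℕ → ℕ → ℂ) (B : ℝ) (hB0 : 0 ≤ B)
    (hB : ∀ z₁ z₂ : ℂ, ‖z₁‖ = 1 → ‖z₂‖ = 1 →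
      ‖∑ m ∈ Finset.range N, ∑ n ∈ Finset.range N, c m n * (z₁ ^ m * z₂ ^ n)‖ ≤ B) (x : E) :
    ‖∑ m ∈ Finset.range N, ∑ n ∈ Finset.range N, c m n • (A₁^[m] (A₂^[n] x))‖ ≤ B * ‖x‖ := by
  have : CompleteSpace E := FiniteDimensional.complete ℂ E
  rcases subsingleton_or_nontrivial E with hE | hE
  · rw [Subsingleton.elim x 0, Subsingleton.elim (∑ m ∈ Finset.range N, _) (0 : E)]; simp
  obtain ⟨U₁, hU₁⟩ : ∃ U₁ : E →L[ℂ] E, U₁ = A₁.toContinuousLinearMap := ⟨_, rfl⟩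
  obtain ⟨U₂, hU₂⟩ : ∃ U₂ : E →L[ℂ] E, U₂ = A₂.toContinuousLinearMap := ⟨_, rfl⟩
  have hu₁ : U₁ ∈ unitary (E →L[ℂ] E) := hU₁ ▸ iso_unitary A₁
  have hu₂ : U₂ ∈ unitary (E →L[ℂ] E) := hU₂ ▸ iso_unitary A₂
  have hU : Commute U₁ U₂ := by
    ext x; rw [hU₁, hU₂]; exact hcomm x
  obtain ⟨T, hT⟩ : ∃ T : E →L[ℂ] E, T = ∑ m ∈ Finset.range N, ∑ n ∈ Finset.range N,
    c m n • (U₁ ^ m * U₂ ^ n) := ⟨_, rfl⟩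
  have hcommT : ∀ S : E →L[ℂ] E, Commute S U₁ → Commute S U₂ → Commute S T := by
    intro S h1 h2
    rw [hT]
    refine Commute.sum_right _ _ _ fun m _ => Commute.sum_right _ _ _ fun n _ => ?_
    exact ((h1.pow_right m).mul_right (h2.pow_right n)).smul_right _
  have hstar : ∀ U ∈ unitary (E →L[ℂ] E), Commute U T → Commute (star T) U := by
    intro U hU h
    have h1 : star T * star U = star U * star T := by
      rw [← star_mul, ← star_mul, h.eq]
    have a1 := Unitary.star_mul_self_of_mem hU
    have a2 := Unitary.mul_star_self_of_mem hU
    change star T * U = U * star T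
    calc star T * U = U * (star U * star T) * U := by rw [← mul_assoc, a2, one_mul]
      _ = U * (star T * star U) * U := by rw [h1]
      _ = U * star T * (star U * U) := by noncomm_ring
      _ = _ := by rw [a1, mul_one]
  have hT1 : Commute U₁ T := hcommT _ (Commute.refl _) hU
  have hT2 : Commute U₂ T := hcommT _ hU.symm (Commute.refl _)
  have hnormal : IsStarNormal T := ⟨hcommT _ (hstar _ hu₁ hT1) (hstar _ hu₂ hT2)⟩
  obtain ⟨μ, hμ, hμn⟩ := spectrum.exists_nnnorm_eq_spectralRadius T
  rw [IsStarNormal.spectralRadius_eq_nnnorm T] at hμn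
  have hμT : ‖μ‖ = ‖T‖ := by
    have : ‖μ‖₊ = ‖T‖₊ := by exact_mod_cast hμn
    exact congrArg NNReal.toReal this
  -- the eigenspace
  have hV1 : LinearMap.ker (T - μ • (1 : E →L[ℂ] E)).toLinearMap ≠ ⊥ := by
    intro h
    rw [spectrum.mem_iff] at hμ
    apply hμ
    have hinj : Function.Injective (T - μ • (1 : E →L[ℂ] E)) := LinearMap.ker_eq_bot.1 h
    have hsurj : Function.Surjective (T - μ • (1 : E →L[ℂ] E)) :=
      LinearMap.injective_iff_surjective.1 hinj
    have hu : IsUnit (T - μ • (1 : E →L[ℂ] E)) :=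
      ContinuousLinearMap.isUnit_iff_bijective.2 ⟨hinj, hsurj⟩
    have := hu.neg
    rwa [neg_sub, ← Algebra.algebraMap_eq_smul_one] at this
  have hmem1 : ∀ x, x ∈ LinearMap.ker (T - μ • (1 : E →L[ℂ] E)).toLinearMap ↔ T x = μ • x := by
    intro x
    rw [LinearMap.mem_ker]
    change T x - μ • x = 0 ↔ _
    rw [sub_eq_zero]
  have hc1 : ∀ x, U₁ (T x) = T (U₁ x) := fun x => congrArg (fun S : E →L[ℂ] E => S x) hT1.eq
  have hc2 : ∀ x, U₂ (T x) = T (U₂ x) := fun x => congrArg (fun S : E →L[ℂ] E => S x) hT2.eq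
  have hc3 : ∀ x, U₁ (U₂ x) = U₂ (U₁ x) := fun x => congrArg (fun S : E →L[ℂ] E => S x) hU.eq
  obtain ⟨z₁, x₁, hx₁, hx₁0, hx₁e⟩ := exists_eig_in U₁.toLinearMap _ (fun x hx => by
    rw [hmem1] at hx ⊢
    change T (U₁ x) = μ • (U₁ x)
    rw [← hc1, hx, map_smul]) hV1
  have hV2 : LinearMap.ker (T - μ • (1 : E →L[ℂ] E)).toLinearMap ⊓
      Module.End.eigenspace U₁.toLinearMap z₁ ≠ ⊥ := by
    intro h
    have : x₁ ∈ (⊥ : Submodule ℂ E) := by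
      rw [← h]; exact ⟨hx₁, Module.End.mem_eigenspace_iff.2 hx₁e⟩
    exact hx₁0 (by simpa using this)
  obtain ⟨z₂, y, ⟨hy1, hy2⟩, hy0, hye⟩ := exists_eig_in U₂.toLinearMap _ (fun x hx => by
    refine ⟨?_, ?_⟩
    · have := hx.1
      rw [SetLike.mem_coe, hmem1] at this ⊢
      change T (U₂ x) = μ • (U₂ x)
      rw [← hc2, this, map_smul]
    · have h := Module.End.mem_eigenspace_iff.1 hx.2
      rw [SetLike.mem_coe, Module.End.mem_eigenspace_iff]
      change U₁ (U₂ x) = z₁ • (U₂ x)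
      have h' : U₁ x = z₁ • x := h
      rw [hc3, h', map_smul]) hV2
  have ey1 : U₁ y = z₁ • y := Module.End.mem_eigenspace_iff.1 hy2
  have ey2 : U₂ y = z₂ • y := hye
  have ey3 : T y = μ • y := (hmem1 y).1 hy1
  have hy0' : ‖y‖ ≠ 0 := norm_ne_zero_iff.2 hy0
  have hz1 : ‖z₁‖ = 1 := by
    have : ‖U₁ y‖ = ‖y‖ := by rw [hU₁]; exact A₁.norm_map y
    rw [ey1, norm_smul] at this
    exact mul_right_cancel₀ hy0' (by rw [this, one_mul])
  have hz2 : ‖z₂‖ = 1 := by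
    have : ‖U₂ y‖ = ‖y‖ := by rw [hU₂]; exact A₂.norm_map y
    rw [ey2, norm_smul] at this
    exact mul_right_cancel₀ hy0' (by rw [this, one_mul])
  have hpow1 : ∀ m, (U₁ ^ m) y = z₁ ^ m • y := by
    intro m
    induction m with
    | zero => simp
    | succ m ih =>
      rw [pow_succ]
      change (U₁ ^ m) (U₁ y) = _
      rw [ey1, map_smul, ih, smul_smul, pow_succ, mul_comm]
  have hpow2 : ∀ m, (U₂ ^ m) y = z₂ ^ m • y := by
    intro m
    induction m with
    | zero => simp
    | succ m ih =>
      rw [pow_succ]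
      change (U₂ ^ m) (U₂ y) = _
      rw [ey2, map_smul, ih, smul_smul, pow_succ, mul_comm]
  have hTapp : ∀ x, T x = ∑ m ∈ Finset.range N, ∑ n ∈ Finset.range N,
      c m n • ((U₁ ^ m) ((U₂ ^ n) x)) := by
    intro x
    rw [hT, _root_.sum_apply]
    refine Finset.sum_congr rfl fun m _ => ?_
    rw [_root_.sum_apply]
    rfl
  have hμe : μ • y = (∑ m ∈ Finset.range N, ∑ n ∈ Finset.range N, c m n * (z₁ ^ m * z₂ ^ n)) • y := by
    rw [← ey3, hTapp, Finset.sum_smul]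
    refine Finset.sum_congr rfl fun m _ => ?_
    rw [Finset.sum_smul]
    refine Finset.sum_congr rfl fun n _ => ?_
    rw [hpow2, map_smul, hpow1, smul_smul, smul_smul]
    congr 1; ring
  have hμB : ‖μ‖ ≤ B := by
    rw [smul_left_injective ℂ hy0 hμe]; exact hB z₁ z₂ hz1 hz2
  have hfin : ∑ m ∈ Finset.range N, ∑ n ∈ Finset.range N, c m n • (A₁^[m] (A₂^[n] x)) = T x := by
    rw [hTapp]
    refine Finset.sum_congr rfl fun m _ => Finset.sum_congr rfl fun n _ => ?_
    rw [hU₁, hU₂, iso_pow, iso_pow]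
  rw [hfin]
  exact (T.le_opNorm x).trans (mul_le_mul_of_nonneg_right (hμT ▸ hμB) (norm_nonneg _))


lemma piLp_normsq {G : Type*} [NormedAddCommGroup G] [InnerProductSpace ℂ G] {ι : Type*} [Fintype ι]
    (f : PiLp 2 (fun _ : ι => G)) : ‖f‖ ^ 2 = ∑ n, ‖f n‖ ^ 2 :=
  PiLp.norm_sq_eq_of_L2 _ f

/-- Finite-dimensional commuting unitary model. -/
lemma exists_model {E₁ E₂ : Type} [NormedAddCommGroup E₁] [InnerProductSpace ℂ E₁]
    [NormedAddCommGroup E₂] [InnerProductSpace ℂ E₂] (L : ℕ)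
    (W : WithLp 2 (E₁ × E₂) ≃ₗᵢ[ℂ] WithLp 2 (E₁ × E₂)) :
    ∃ A₁ A₂ : PiLp 2 (fun _ : Fin (L + 1) => WithLp 2 (E₁ × E₂)) →ₗᵢ[ℂ]
        PiLp 2 (fun _ : Fin (L + 1) => WithLp 2 (E₁ × E₂)),
      (∀ f n, A₁ f n = W.symm (WithLp.toLp 2 ((f (n + 1)).fst, (f n).snd))) ∧
      (∀ f n, A₂ f n = WithLp.toLp 2 ((W (f n)).fst, (W (f (n + 1))).snd)) ∧
      (∀ f, A₁ (A₂ f) = A₂ (A₁ f)) := by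
  have hshift : ∀ g : Fin (L + 1) → ℝ, ∑ n, g (n + 1) = ∑ n, g n := fun g =>
    Equiv.sum_comp (Equiv.addRight (1 : Fin (L + 1))) g
  obtain ⟨A₁, hA₁⟩ : ∃ A₁ : PiLp 2 (fun _ : Fin (L + 1) => WithLp 2 (E₁ × E₂)) →ₗᵢ[ℂ]
      PiLp 2 (fun _ : Fin (L + 1) => WithLp 2 (E₁ × E₂)),
      ∀ f n, A₁ f n = W.symm (WithLp.toLp 2 ((f (n + 1)).fst, (f n).snd)) := by
    refine ⟨{ toFun := fun f => WithLp.toLp 2 (fun n => W.symm (WithLp.toLp 2 ((f (n + 1)).fst, (f n).snd)))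
              map_add' := ?_
              map_smul' := ?_
              norm_map' := ?_ }, fun f n => rfl⟩
    · intro f g
      ext1 n
      simp only [PiLp.add_apply, ← map_add]
      rfl
    · intro t f
      ext1 n
      simp only [PiLp.smul_apply, RingHom.id_apply, ← map_smul]
      rfl
    · intro f
      rw [← sq_eq_sq₀ (norm_nonneg _) (norm_nonneg _), piLp_normsq, piLp_normsq]
      simp only [LinearMap.coe_mk, AddHom.coe_mk, LinearIsometryEquiv.norm_map, withLp_normsq]
      simp only [WithLp.prod_norm_sq_eq_of_L2, Finset.sum_add_distrib]
      rw [hshift (fun n => ‖(f n).fst‖ ^ 2)]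
  obtain ⟨A₂, hA₂⟩ : ∃ A₂ : PiLp 2 (fun _ : Fin (L + 1) => WithLp 2 (E₁ × E₂)) →ₗᵢ[ℂ]
      PiLp 2 (fun _ : Fin (L + 1) => WithLp 2 (E₁ × E₂)),
      ∀ f n, A₂ f n = WithLp.toLp 2 ((W (f n)).fst, (W (f (n + 1))).snd) := by
    refine ⟨{ toFun := fun f => WithLp.toLp 2 (fun n => WithLp.toLp 2 ((W (f n)).fst, (W (f (n + 1))).snd))
              map_add' := ?_
              map_smul' := ?_
              norm_map' := ?_ }, fun f n => rfl⟩
    · intro f g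
      ext1 n
      simp only [PiLp.add_apply, map_add]
      rfl
    · intro t f
      ext1 n
      simp only [PiLp.smul_apply, RingHom.id_apply, map_smul]
      rfl
    · intro f
      rw [← sq_eq_sq₀ (norm_nonneg _) (norm_nonneg _), piLp_normsq, piLp_normsq]
      simp only [LinearMap.coe_mk, AddHom.coe_mk, withLp_normsq]
      have : ∀ n, ‖f n‖ ^ 2 = ‖W (f n)‖ ^ 2 := fun n => by rw [LinearIsometryEquiv.norm_map]
      simp only [this, WithLp.prod_norm_sq_eq_of_L2 (W _), Finset.sum_add_distrib]
      rw [hshift (fun n => ‖(W (f n)).snd‖ ^ 2)]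
  refine ⟨A₁, A₂, hA₁, hA₂, fun f => ?_⟩
  ext1 n
  rw [hA₁, hA₂, hA₂, hA₂, hA₁, hA₁, LinearIsometryEquiv.apply_symm_apply,
    LinearIsometryEquiv.apply_symm_apply]
  change W.symm (W (f (n + 1))) = f (n + 1)
  rw [LinearIsometryEquiv.symm_apply_apply]

/-- The von Neumann inequality for finitely many points. -/
lemma von_neumann {ι : Type} [Fintype ι] (l : ι → ℂ × ℂ) (hl : ∀ i, l i ∈ Bidisk)
    (K : ι → ι → ℂ)
    (h1 : PSD (fun i j => (1 - (l i).1 * starRingEnd ℂ (l j).1) * K i j))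
    (h2 : PSD (fun i j => (1 - (l i).2 * starRingEnd ℂ (l j).2) * K i j))
    {V : Type*} [NormedAddCommGroup V] [InnerProductSpace ℂ V] (v : ι → V)
    (hv : ∀ i j, inner ℂ (v j) (v i) = K i j)
    (N : ℕ) (c : ℕ → ℕ → ℂ) (B : ℝ) (hB0 : 0 ≤ B)
    (hB : ∀ z₁ z₂ : ℂ, ‖z₁‖ = 1 → ‖z₂‖ = 1 →
      ‖∑ m ∈ Finset.range N, ∑ n ∈ Finset.range N, c m n * (z₁ ^ m * z₂ ^ n)‖ ≤ B)
    (p : ι → ℂ) (hp : ∀ i, p i = ∑ m ∈ Finset.range N, ∑ n ∈ Finset.range N,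
      c m n * ((l i).1 ^ m * (l i).2 ^ n)) (a : ι → ℂ) :
    ‖∑ i, (a i * p i) • v i‖ ^ 2 ≤ B ^ 2 * ‖∑ i, a i • v i‖ ^ 2 := by
  obtain ⟨E₁, _, _, _, x, hx⟩ := h1.gram_fin
  obtain ⟨E₂, _, _, _, y, hy⟩ := h2.gram_fin
  let s : ι → ℂ := fun i => (l i).1 * (l i).2
  let g : ι → WithLp 2 (E₁ × E₂) := fun i => WithLp.toLp 2 (x i, (l i).1 • y i)
  let g' : ι → WithLp 2 (E₁ × E₂) := fun i => WithLp.toLp 2 ((l i).2 • x i, y i)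
  have hg : ∀ i j, inner ℂ (g j) (g i) = (1 - s i * starRingEnd ℂ (s j)) * K i j := by
    intro i j
    simp only [g, withLp_inner, inner_smul_left, inner_smul_right, hx, hy, s, map_mul]
    ring
  have hg' : ∀ i j, inner ℂ (g' j) (g' i) = (1 - s i * starRingEnd ℂ (s j)) * K i j := by
    intro i j
    simp only [g', withLp_inner, inner_smul_left, inner_smul_right, hx, hy, s, map_mul]
    ring
  obtain ⟨W, hW⟩ := exists_unitary g g' (fun i j => by rw [hg, hg'])
  have hWs : ∀ i, W.symm (g' i) = g i := fun i => by
    rw [← hW, LinearIsometryEquiv.symm_apply_apply]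
  -- telescoping
  have htel0 : ∀ (b : ι → ℂ), ‖∑ i, b i • g i‖ ^ 2 =
      ‖∑ i, b i • v i‖ ^ 2 - ‖∑ i, (b i * s i) • v i‖ ^ 2 := by
    intro b
    have e1 := normsq_sum g Finset.univ b
    have e2 := normsq_sum v Finset.univ b
    have e3 := normsq_sum v Finset.univ (fun i => b i * s i)
    have : ((‖∑ i, b i • g i‖ ^ 2 : ℝ) : ℂ) =
      ((‖∑ i, b i • v i‖ ^ 2 - ‖∑ i, (b i * s i) • v i‖ ^ 2 : ℝ) : ℂ) := by
      rw [Complex.ofReal_sub, e1, e2, e3, ← Finset.sum_sub_distrib]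
      refine Finset.sum_congr rfl fun i _ => ?_
      rw [← Finset.sum_sub_distrib]
      refine Finset.sum_congr rfl fun j _ => ?_
      rw [hg, hv]; simp only [map_mul]; ring
    exact_mod_cast this
  have htel : ∀ (b : ι → ℂ) (M : ℕ), ∑ n ∈ Finset.range M, ‖∑ i, (b i * s i ^ n) • g i‖ ^ 2 =
      ‖∑ i, b i • v i‖ ^ 2 - ‖∑ i, (b i * s i ^ M) • v i‖ ^ 2 := by
    intro b M
    induction M with
    | zero => simp
    | succ M ih =>
      rw [Finset.sum_range_succ, ih, htel0]
      simp only [pow_succ, mul_assoc]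
      ring
  -- main estimate
  have main : ∀ M : ℕ, ‖∑ i, (a i * p i) • v i‖ ^ 2 - ‖∑ i, ((a i * p i) * s i ^ M) • v i‖ ^ 2 ≤
      B ^ 2 * ‖∑ i, a i • v i‖ ^ 2 := by
    intro M
    let L := M + 2 * N
    obtain ⟨A₁, A₂, hA₁, hA₂, hcomm⟩ := exists_model L W
    let e : ι → PiLp 2 (fun _ : Fin (L + 1) => WithLp 2 (E₁ × E₂)) := fun i =>
      WithLp.toLp 2 (fun n => s i ^ (n : ℕ) • g i)
    have he : ∀ i n, e i n = s i ^ (n : ℕ) • g i := fun i n => rfl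
    have hval : ∀ n : Fin (L + 1), (n : ℕ) + 1 < L + 1 → ((n + 1 : Fin (L + 1)) : ℕ) = n + 1 := by
      intro n hn
      apply Fin.val_add_one_of_lt
      rw [Fin.lt_def, Fin.val_last]; omega
    have hloc1 : ∀ (i : ι) (d : ℕ) (f) (t : ℂ), (∀ n : Fin (L + 1), (n : ℕ) + d < L + 1 → f n = t • e i n) →
        ∀ n : Fin (L + 1), (n : ℕ) + (d + 1) < L + 1 → A₁ f n = ((l i).1 * t) • e i n := by
      intro i d f t hf n hn
      have hv1 := hval n (by omega)
      rw [hA₁, hf n (by omega), hf (n + 1) (by omega), he, he, hv1]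
      have : (WithLp.toLp 2 ((t • s i ^ ((n : ℕ) + 1) • g i).fst, (t • s i ^ (n : ℕ) • g i).snd) :
          WithLp 2 (E₁ × E₂)) = ((l i).1 * t * s i ^ (n : ℕ)) • g' i := by
        change (WithLp.toLp 2 (t • s i ^ ((n : ℕ) + 1) • x i, t • s i ^ (n : ℕ) • (l i).1 • y i) :
          WithLp 2 (E₁ × E₂)) = WithLp.toLp 2 (((l i).1 * t * s i ^ (n : ℕ)) • (l i).2 • x i,
            ((l i).1 * t * s i ^ (n : ℕ)) • y i)
        simp only [smul_smul]
        congr 3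
        · simp only [s]; ring
        · ring
      rw [this, map_smul, hWs, smul_smul]
    have hloc2 : ∀ (i : ι) (d : ℕ) (f) (t : ℂ), (∀ n : Fin (L + 1), (n : ℕ) + d < L + 1 → f n = t • e i n) →
        ∀ n : Fin (L + 1), (n : ℕ) + (d + 1) < L + 1 → A₂ f n = ((l i).2 * t) • e i n := by
      intro i d f t hf n hn
      have hv1 := hval n (by omega)
      rw [hA₂, hf n (by omega), hf (n + 1) (by omega), he, he, hv1]
      simp only [map_smul, hW, smul_smul]
      change (WithLp.toLp 2 ((t * s i ^ (n : ℕ)) • (l i).2 • x i, (t * s i ^ ((n : ℕ) + 1)) • y i) :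
          WithLp 2 (E₁ × E₂)) = WithLp.toLp 2 (((l i).2 * t * s i ^ (n : ℕ)) • x i,
            ((l i).2 * t * s i ^ (n : ℕ)) • (l i).1 • y i)
      simp only [smul_smul]
      congr 3
      · ring
      · simp only [s]; ring
    have hit2 : ∀ (i : ι) (k : ℕ), ∀ n : Fin (L + 1), (n : ℕ) + k < L + 1 →
        (A₂^[k] (e i)) n = ((l i).2 ^ k) • e i n := by
      intro i k
      induction k with
      | zero => intro n _; simp
      | succ k ih =>
        intro n hn
        rw [Function.iterate_succ_apply', pow_succ, mul_comm]
        exact hloc2 i k _ _ ih n hn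
    have hit1 : ∀ (i : ι) (k m : ℕ), ∀ n : Fin (L + 1), (n : ℕ) + (k + m) < L + 1 →
        (A₁^[m] (A₂^[k] (e i))) n = ((l i).1 ^ m * (l i).2 ^ k) • e i n := by
      intro i k m
      induction m with
      | zero => intro n hn; simpa using hit2 i k n hn
      | succ m ih =>
        intro n hn
        rw [Function.iterate_succ_apply', pow_succ, mul_comm _ (l i).1, mul_assoc]
        exact hloc1 i (k + m) _ _ ih n hn
    have hnorm := poly_norm_le A₁ A₂ hcomm N c B hB0 hB (∑ i, a i • e i)
    set R := ∑ m ∈ Finset.range N, ∑ n ∈ Finset.range N, c m n • (A₁^[m] (A₂^[n] (∑ i, a i • e i)))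
      with hR
    have hlin1 : ∀ (k : ℕ) (b : ι → ℂ) (f : ι → PiLp 2 (fun _ : Fin (L + 1) => WithLp 2 (E₁ × E₂))),
        A₁^[k] (∑ i, b i • f i) = ∑ i, b i • A₁^[k] (f i) := by
      intro k b f
      simp only [← iso_pow, map_sum, map_smul]
    have hlin2 : ∀ (k : ℕ) (b : ι → ℂ) (f : ι → PiLp 2 (fun _ : Fin (L + 1) => WithLp 2 (E₁ × E₂))),
        A₂^[k] (∑ i, b i • f i) = ∑ i, b i • A₂^[k] (f i) := by
      intro k b f
      simp only [← iso_pow, map_sum, map_smul]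
    have hRn : ∀ n : Fin (L + 1), (n : ℕ) < M → R n = ∑ i, ((a i * p i) * s i ^ (n : ℕ)) • g i := by
      intro n hn
      have hap : ∀ (S : Finset ℕ) (f : ℕ → PiLp 2 (fun _ : Fin (L + 1) => WithLp 2 (E₁ × E₂))),
          (∑ m ∈ S, f m) n = ∑ m ∈ S, f m n := fun S f => by
        simp
      have hap' : ∀ (f : ι → PiLp 2 (fun _ : Fin (L + 1) => WithLp 2 (E₁ × E₂))),
          (∑ m, f m) n = ∑ m, f m n := fun f => by
        simp
      have : ∀ m ∈ Finset.range N, ∀ k ∈ Finset.range N,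
          (c m k • (A₁^[m] (A₂^[k] (∑ i, a i • e i)))) n =
          ∑ i, (c m k * ((l i).1 ^ m * (l i).2 ^ k) * (a i * s i ^ (n : ℕ))) • g i := by
        intro m hm k hk
        rw [Finset.mem_range] at hm hk
        rw [hlin2, hlin1, PiLp.smul_apply, hap', Finset.smul_sum]
        refine Finset.sum_congr rfl fun i _ => ?_
        rw [PiLp.smul_apply, hit1 i k m n (by simp only [L]; omega), he]
        simp only [smul_smul]
        congr 1; ring
      rw [hR, hap]
      simp only [hap]
      rw [Finset.sum_congr rfl fun m hm => Finset.sum_congr rfl fun k hk => this m hm k hk]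
      have e1 : ∀ i, ((a i * p i) * s i ^ (n : ℕ)) • g i = ∑ m ∈ Finset.range N, ∑ k ∈ Finset.range N,
          (c m k * ((l i).1 ^ m * (l i).2 ^ k) * (a i * s i ^ (n : ℕ))) • g i := by
        intro i
        simp only [← Finset.sum_smul, ← Finset.sum_mul, ← hp]
        congr 1; ring
      simp only [e1]
      rw [Finset.sum_comm (s := Finset.univ)]
      refine Finset.sum_congr rfl fun m _ => ?_
      rw [Finset.sum_comm (s := Finset.univ)]
    have hlow : ∑ n ∈ Finset.range M, ‖∑ i, ((a i * p i) * s i ^ n) • g i‖ ^ 2 ≤ ‖R‖ ^ 2 := by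
      rw [piLp_normsq]
      calc _ = ∑ n ∈ Finset.range M, (if h : n < L + 1 then ‖R ⟨n, h⟩‖ ^ 2 else 0) := by
            refine Finset.sum_congr rfl fun n hn => ?_
            rw [Finset.mem_range] at hn
            have hn' : n < L + 1 := by simp only [L]; omega
            rw [dif_pos hn', hRn ⟨n, hn'⟩ hn]
        _ ≤ ∑ n ∈ Finset.range (L + 1), (if h : n < L + 1 then ‖R ⟨n, h⟩‖ ^ 2 else 0) := by
            refine Finset.sum_le_sum_of_subset_of_nonneg ?_ fun n _ _ => ?_
            · exact Finset.range_subset_range.2 (by simp only [L]; omega)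
            · split_ifs <;> positivity
        _ = _ := by
            rw [Finset.sum_range]
            refine Finset.sum_congr rfl fun n _ => ?_
            rw [dif_pos n.2]
    have hup : ‖∑ i, a i • e i‖ ^ 2 ≤ ‖∑ i, a i • v i‖ ^ 2 := by
      rw [piLp_normsq]
      have : ∀ n : Fin (L + 1), (∑ i, a i • e i) n = ∑ i, (a i * s i ^ (n : ℕ)) • g i := by
        intro n
        have hap' : ∀ (f : ι → PiLp 2 (fun _ : Fin (L + 1) => WithLp 2 (E₁ × E₂))),
          (∑ m, f m) n = ∑ m, f m n := fun f => by
          simp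
        rw [hap']
        refine Finset.sum_congr rfl fun i _ => ?_
        rw [PiLp.smul_apply, he, smul_smul]
      simp only [this]
      have h := htel a (L + 1)
      rw [Finset.sum_range] at h
      rw [h]
      linarith [sq_nonneg ‖∑ i, (a i * s i ^ (L + 1)) • v i‖]
    rw [← htel (fun i => a i * p i) M]
    calc _ ≤ ‖R‖ ^ 2 := hlow
      _ ≤ (B * ‖∑ i, a i • e i‖) ^ 2 := pow_le_pow_left₀ (norm_nonneg _) hnorm 2
      _ = B ^ 2 * ‖∑ i, a i • e i‖ ^ 2 := by ring
      _ ≤ _ := by gcongr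
  have hlim : Filter.Tendsto (fun M : ℕ => ‖∑ i, (a i * p i) • v i‖ ^ 2 -
      ‖∑ i, ((a i * p i) * s i ^ M) • v i‖ ^ 2) Filter.atTop
      (nhds (‖∑ i, (a i * p i) • v i‖ ^ 2 - ‖∑ i, ((a i * p i) * 0) • v i‖ ^ 2)) := by
    refine tendsto_const_nhds.sub ((Filter.Tendsto.norm ?_).pow 2)
    refine tendsto_finsetSum _ fun i _ => (Filter.Tendsto.const_mul _ ?_).smul_const _
    apply tendsto_pow_atTop_nhds_zero_of_norm_lt_one
    simp only [s, norm_mul]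
    have := (hl i).1
    have := (hl i).2
    nlinarith [norm_nonneg (l i).1, norm_nonneg (l i).2]
  have := le_of_tendsto hlim (.of_forall main)
  simpa using this


lemma hinf_bound {ι : Type} [Fintype ι] (l : ι → ℂ × ℂ) (hl : ∀ i, l i ∈ Bidisk)
    (K : ι → ι → ℂ)
    (h1 : PSD (fun i j => (1 - (l i).1 * starRingEnd ℂ (l j).1) * K i j))
    (h2 : PSD (fun i j => (1 - (l i).2 * starRingEnd ℂ (l j).2) * K i j))
    {V : Type*} [NormedAddCommGroup V] [InnerProductSpace ℂ V] (v : ι → V)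
    (hv : ∀ i j, inner ℂ (v j) (v i) = K i j)
    (φ : ℂ × ℂ → ℂ) (hφ : DifferentiableOn ℂ φ Bidisk) (C : ℝ)
    (hC : ∀ z ∈ Bidisk, ‖φ z‖ ≤ C) (a : ι → ℂ) :
    ‖∑ i, (a i * φ (l i)) • v i‖ ≤ C * ‖∑ i, a i • v i‖ := by
  have hC0 : 0 ≤ C := by
    have h0 : ((0, 0) : ℂ × ℂ) ∈ Bidisk := by simp [Bidisk]
    exact (norm_nonneg _).trans (hC _ h0)
  have hmem : ∀ s : ℝ, 0 < s → s < 1 → ∀ z₁ z₂ : ℂ, ‖z₁‖ ≤ 1 → ‖z₂‖ ≤ 1 →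
      (((s : ℂ) ^ 3 * z₁, (s : ℂ) ^ 3 * z₂) : ℂ × ℂ) ∈ Bidisk := by
    intro s hs0 hs1 z₁ z₂ hz₁ hz₂
    have h3 : s ^ 3 < 1 := pow_lt_one₀ hs0.le hs1 (by norm_num)
    have h3' : 0 < s ^ 3 := by positivity
    have hn : ‖(s : ℂ) ^ 3‖ = s ^ 3 := by
      rw [norm_pow, Complex.norm_real, Real.norm_of_nonneg hs0.le]
    constructor
    · show ‖(s : ℂ) ^ 3 * z₁‖ < 1
      rw [norm_mul, hn]; nlinarith [norm_nonneg z₁]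
    · show ‖(s : ℂ) ^ 3 * z₂‖ < 1
      rw [norm_mul, hn]; nlinarith [norm_nonneg z₂]
  have step1 : ∀ s : ℝ, 0 < s → s < 1 →
      ‖∑ i, (a i * φ ((s : ℂ) ^ 3 * (l i).1, (s : ℂ) ^ 3 * (l i).2)) • v i‖ ≤
        C * ‖∑ i, a i • v i‖ := by
    intro s hs0 hs1
    have hε : ∀ ε : ℝ, 0 < ε →
        ‖∑ i, (a i * φ ((s : ℂ) ^ 3 * (l i).1, (s : ℂ) ^ 3 * (l i).2)) • v i‖ ≤
        C * ‖∑ i, a i • v i‖ + ε * (‖∑ i, a i • v i‖ + ∑ i, ‖a i‖ * ‖v i‖) := by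
      intro ε hε
      obtain ⟨N, c, hN⟩ := two_var φ hφ C hC s hs0 hs1 ε hε
      let p : ι → ℂ := fun i => ∑ m ∈ Finset.range N, ∑ n ∈ Finset.range N,
        c m n * ((l i).1 ^ m * (l i).2 ^ n)
      have hvn := von_neumann l hl K h1 h2 v hv N c (C + ε) (by positivity) (by
        intro z₁ z₂ hz₁ hz₂
        have e1 := hN z₁ z₂ hz₁.le hz₂.le
        have e2 := hC _ (hmem s hs0 hs1 z₁ z₂ hz₁.le hz₂.le)
        have e3 := norm_sub_norm_le (∑ m ∈ Finset.range N, ∑ n ∈ Finset.range N,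
          c m n * (z₁ ^ m * z₂ ^ n)) (φ (s ^ 3 * z₁, s ^ 3 * z₂))
        rw [norm_sub_rev] at e3
        linarith) p (fun i => rfl) a
      rw [← mul_pow] at hvn
      have hvn' := (pow_le_pow_iff_left₀ (norm_nonneg _) (by positivity) two_ne_zero).1 hvn
      have hd : ‖∑ i, (a i * φ ((s : ℂ) ^ 3 * (l i).1, (s : ℂ) ^ 3 * (l i).2)) • v i -
          ∑ i, (a i * p i) • v i‖ ≤ ε * ∑ i, ‖a i‖ * ‖v i‖ := by
        rw [← Finset.sum_sub_distrib, Finset.mul_sum]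
        refine norm_sum_le_of_le _ fun i _ => ?_
        rw [← sub_smul, ← mul_sub, norm_smul, norm_mul]
        have e1 := hN (l i).1 (l i).2 (hl i).1.le (hl i).2.le
        have e2 : 0 ≤ ‖a i‖ * ‖v i‖ := by positivity
        calc _ ≤ ‖a i‖ * ε * ‖v i‖ := by gcongr
          _ = _ := by ring
      have e4 := norm_le_norm_add_norm_sub'
        (∑ i, (a i * φ ((s : ℂ) ^ 3 * (l i).1, (s : ℂ) ^ 3 * (l i).2)) • v i)
        (∑ i, (a i * p i) • v i)
      linarith
    have ht : Filter.Tendsto (fun ε : ℝ => C * ‖∑ i, a i • v i‖ +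
        ε * (‖∑ i, a i • v i‖ + ∑ i, ‖a i‖ * ‖v i‖)) (nhdsWithin 0 (Set.Ioi 0))
        (nhds (C * ‖∑ i, a i • v i‖ + 0 * (‖∑ i, a i • v i‖ + ∑ i, ‖a i‖ * ‖v i‖))) := by
      apply Filter.Tendsto.mono_left _ nhdsWithin_le_nhds
      apply Continuous.tendsto (f := fun ε : ℝ => C * ‖∑ i, a i • v i‖ +
        ε * (‖∑ i, a i • v i‖ + ∑ i, ‖a i‖ * ‖v i‖))
      fun_prop
    have := ge_of_tendsto ht (by
      filter_upwards [self_mem_nhdsWithin] with ε h using hε ε h)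
    simpa using this
  have ht : Filter.Tendsto (fun s : ℝ =>
      ‖∑ i, (a i * φ ((s : ℂ) ^ 3 * (l i).1, (s : ℂ) ^ 3 * (l i).2)) • v i‖)
      (nhdsWithin 1 (Set.Iio 1)) (nhds ‖∑ i, (a i * φ (l i)) • v i‖) := by
    refine Filter.Tendsto.norm (tendsto_finsetSum _ fun i _ => ?_)
    refine Filter.Tendsto.smul_const (Filter.Tendsto.const_mul _ ?_) _
    have hc : ContinuousAt φ (l i) :=
      (hφ.differentiableAt (isOpen_bidisk.mem_nhds (hl i))).continuousAt
    refine hc.tendsto.comp (Filter.Tendsto.mono_left ?_ nhdsWithin_le_nhds)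
    have hcont : Continuous (fun s : ℝ =>
      (((s : ℂ) ^ 3 * (l i).1, (s : ℂ) ^ 3 * (l i).2) : ℂ × ℂ)) := by fun_prop
    have := hcont.tendsto 1
    simpa using this
  refine le_of_tendsto ht ?_
  have : Set.Ioo (0 : ℝ) 1 ∈ nhdsWithin (1 : ℝ) (Set.Iio 1) := Ioo_mem_nhdsLT (by norm_num)
  filter_upwards [this] with s hs using step1 s hs.1 hs.2

/-- Multiplication of coefficients by `w` is bounded by `B` for all admissible kernels. -/
def GoodMul (lam : ℕ → ℂ × ℂ) (B : ℝ) (w : ℕ → ℂ) : Prop :=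
  ∀ k : ℂ × ℂ → ℂ × ℂ → ℂ, IsAdmissibleKernel k →
    ∀ (H : Type) (_ : NormedAddCommGroup H) (_ : InnerProductSpace ℂ H) (v : ℕ → H),
      (∀ i j, inner ℂ (v j) (v i) = k (lam i) (lam j)) → ∀ (F : Finset ℕ) (a : ℕ → ℂ),
        ‖∑ i ∈ F, (a i * w i) • v i‖ ≤ B * ‖∑ i ∈ F, a i • v i‖

lemma goodMul_of_interp (lam : ℕ → ℂ × ℂ) (hlam : ∀ i, lam i ∈ Bidisk) (w : ℕ → ℂ)
    (φ : ℂ × ℂ → ℂ) (hφ : DifferentiableOn ℂ φ Bidisk) (C : ℝ)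
    (hC : ∀ z ∈ Bidisk, ‖φ z‖ ≤ C) (hw : ∀ i, φ (lam i) = w i) : GoodMul lam C w := by
  intro k hk H _ _ v hv F a
  have hl : ∀ i : {i // i ∈ F}, lam i ∈ Bidisk := fun i => hlam i
  have := hinf_bound (fun i : {i // i ∈ F} => lam i) hl (fun i j => k (lam i) (lam j))
    (hk.2.1.psd (fun i : {i // i ∈ F} => lam i) hl)
    (hk.2.2.psd (fun i : {i // i ∈ F} => lam i) hl) (fun i => v i) (fun i j => hv i j) φ hφ C hC
    (fun i => a i)
  simp only [hw] at this
  rw [← Finset.sum_coe_sort F (fun i => (a i * w i) • v i),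
    ← Finset.sum_coe_sort F (fun i => a i • v i)]
  exact this

lemma goodMul_uniform (lam : ℕ → ℂ × ℂ)
    (h : ∀ w : ℕ → ℂ, (∃ Cw : ℝ, ∀ i, ‖w i‖ ≤ Cw) → ∃ B : ℝ, GoodMul lam B w) :
    ∃ B : ℝ, 0 < B ∧ ∀ w : ℕ → ℂ, (∀ i, ‖w i‖ ≤ 1) → GoodMul lam B w := by
  let T : ℕ → Set (BoundedContinuousFunction ℕ ℂ) := fun n => {w | GoodMul lam n w}
  have hcl : ∀ n, IsClosed (T n) := by
    intro n
    simp only [T, GoodMul]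
    have : {w : BoundedContinuousFunction ℕ ℂ | ∀ k : ℂ × ℂ → ℂ × ℂ → ℂ, IsAdmissibleKernel k →
      ∀ (H : Type) (_ : NormedAddCommGroup H) (_ : InnerProductSpace ℂ H) (v : ℕ → H),
      (∀ i j, inner ℂ (v j) (v i) = k (lam i) (lam j)) → ∀ (F : Finset ℕ) (a : ℕ → ℂ),
        ‖∑ i ∈ F, (a i * w i) • v i‖ ≤ (n : ℝ) * ‖∑ i ∈ F, a i • v i‖} =
      ⋂ (k : ℂ × ℂ → ℂ × ℂ → ℂ) (_ : IsAdmissibleKernel k) (H : Type)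
        (_ : NormedAddCommGroup H) (_ : InnerProductSpace ℂ H) (v : ℕ → H)
        (_ : ∀ i j, inner ℂ (v j) (v i) = k (lam i) (lam j)) (F : Finset ℕ) (a : ℕ → ℂ),
        {w : BoundedContinuousFunction ℕ ℂ |
          ‖∑ i ∈ F, (a i * w i) • v i‖ ≤ (n : ℝ) * ‖∑ i ∈ F, a i • v i‖} := by
      ext w; simp only [Set.mem_setOf_eq, Set.mem_iInter]
    rw [this]
    refine isClosed_iInter fun k => isClosed_iInter fun _ => isClosed_iInter fun H =>
      isClosed_iInter fun _ => isClosed_iInter fun _ => isClosed_iInter fun v =>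
      isClosed_iInter fun _ => isClosed_iInter fun F => isClosed_iInter fun a => ?_
    refine isClosed_le (Continuous.norm (continuous_finsetSum _ fun i _ => ?_)) continuous_const
    have : Continuous (fun w : BoundedContinuousFunction ℕ ℂ => w i) :=
      BoundedContinuousFunction.lipschitz_eval_const i |>.continuous
    exact (continuous_const.mul this).smul continuous_const
  have hU : ⋃ n, T n = Set.univ := by
    refine Set.eq_univ_of_forall fun w => ?_
    obtain ⟨B, hB⟩ := h w ⟨‖w‖, fun i => w.norm_coe_le_norm i⟩
    obtain ⟨n, hn⟩ := exists_nat_ge B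
    refine Set.mem_iUnion.2 ⟨n, ?_⟩
    intro k hk H _ _ v hv F a
    refine (hB k hk H _ _ v hv F a).trans ?_
    gcongr
  obtain ⟨n, w₀, hw₀⟩ := nonempty_interior_of_iUnion_of_closed hcl hU
  obtain ⟨δ, hδ, hball⟩ := Metric.isOpen_iff.1 isOpen_interior w₀ hw₀
  refine ⟨4 * n / δ + 1, by positivity, fun w hw => ?_⟩
  intro k hk H _ _ v hv F a
  let wb : BoundedContinuousFunction ℕ ℂ :=
    BoundedContinuousFunction.ofNormedAddCommGroupDiscrete w 1 hw
  have hwb : ∀ i, wb i = w i := fun i => rfl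
  have hnw : ‖wb‖ ≤ 1 := (BoundedContinuousFunction.norm_le zero_le_one).2 hw
  have m0 : w₀ ∈ T n := interior_subset hw₀
  have m1 : w₀ + ((δ / 2 : ℝ) : ℂ) • wb ∈ T n := by
    refine interior_subset (hball ?_)
    rw [Metric.mem_ball, dist_eq_norm, add_sub_cancel_left, norm_smul, Complex.norm_real,
      Real.norm_of_nonneg (by positivity)]
    nlinarith
  have e0 := m0 k hk H _ _ v hv F a
  have e1 := m1 k hk H _ _ v hv F a
  have e2 : ((δ / 2 : ℝ) : ℂ) • ∑ i ∈ F, (a i * w i) • v i =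
      ∑ i ∈ F, (a i * (w₀ + ((δ / 2 : ℝ) : ℂ) • wb) i) • v i - ∑ i ∈ F, (a i * w₀ i) • v i := by
    rw [← Finset.sum_sub_distrib, Finset.smul_sum]
    refine Finset.sum_congr rfl fun i _ => ?_
    rw [← sub_smul, smul_smul]
    congr 1
    simp only [BoundedContinuousFunction.coe_add, BoundedContinuousFunction.coe_smul,
      Pi.add_apply, smul_eq_mul, hwb]
    ring
  have e3 := norm_sub_le (∑ i ∈ F, (a i * (w₀ + ((δ / 2 : ℝ) : ℂ) • wb) i) • v i)
    (∑ i ∈ F, (a i * w₀ i) • v i)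
  rw [← e2, norm_smul, Complex.norm_real, Real.norm_of_nonneg (by positivity)] at e3
  have e4 : δ / 2 * ‖∑ i ∈ F, (a i * w i) • v i‖ ≤ 2 * n * ‖∑ i ∈ F, a i • v i‖ := by linarith
  have e5 : ‖∑ i ∈ F, (a i * w i) • v i‖ ≤ 4 * n / δ * ‖∑ i ∈ F, a i • v i‖ := by
    rw [div_mul_eq_mul_div, le_div_iff₀ hδ]; linarith
  nlinarith [norm_nonneg (∑ i ∈ F, a i • v i)]

lemma signs {H : Type} [NormedAddCommGroup H] [InnerProductSpace ℂ H] (u : ℕ → H)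
    (F : Finset ℕ) :
    (∃ ε : ℕ → ℂ, (∀ i, ε i = 1 ∨ ε i = -1) ∧
      ‖∑ i ∈ F, ε i • u i‖ ^ 2 ≤ ∑ i ∈ F, ‖u i‖ ^ 2) ∧
    (∃ ε : ℕ → ℂ, (∀ i, ε i = 1 ∨ ε i = -1) ∧
      ∑ i ∈ F, ‖u i‖ ^ 2 ≤ ‖∑ i ∈ F, ε i • u i‖ ^ 2) := by
  classical
  have upd : ∀ (ε : ℕ → ℂ) (x : ℕ) (c : ℂ) (G : Finset ℕ), x ∉ G →
      ∑ i ∈ G, (Function.update ε x c) i • u i = ∑ i ∈ G, ε i • u i := by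
    intro ε x c G hx
    refine Finset.sum_congr rfl fun i hi => ?_
    rw [Function.update_of_ne (by rintro rfl; exact hx hi)]
  have updp : ∀ (ε : ℕ → ℂ) (x : ℕ) (c : ℂ), (∀ i, ε i = 1 ∨ ε i = -1) → (c = 1 ∨ c = -1) →
      ∀ i, Function.update ε x c i = 1 ∨ Function.update ε x c i = -1 := by
    intro ε x c h hc i
    by_cases hi : i = x
    · subst hi; simpa using hc
    · rw [Function.update_of_ne hi]; exact h i
  induction F using Finset.induction_on with
  | empty => exact ⟨⟨fun _ => 1, by simp, by simp⟩, ⟨fun _ => 1, by simp, by simp⟩⟩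
  | insert x G hx ih =>
    obtain ⟨⟨ε, h1, h2⟩, ⟨η, h3, h4⟩⟩ := ih
    constructor
    · have pl := parallelogram_law_with_norm ℂ (u x) (∑ i ∈ G, ε i • u i)
      by_cases hc : ‖u x + ∑ i ∈ G, ε i • u i‖ ^ 2 ≤ ‖u x‖ ^ 2 + ∑ i ∈ G, ‖u i‖ ^ 2
      · refine ⟨Function.update ε x 1, updp _ _ _ h1 (Or.inl rfl), ?_⟩
        rw [Finset.sum_insert hx, Finset.sum_insert hx, upd _ _ _ _ hx]
        simpa using hc
      · refine ⟨Function.update ε x (-1), updp _ _ _ h1 (Or.inr rfl), ?_⟩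
        rw [Finset.sum_insert hx, Finset.sum_insert hx, upd _ _ _ _ hx]
        simp only [Function.update_self, neg_smul, one_smul]
        rw [← norm_neg, neg_add, neg_neg, ← sub_eq_add_neg]
        push Not at hc
        nlinarith
    · have pl := parallelogram_law_with_norm ℂ (u x) (∑ i ∈ G, η i • u i)
      by_cases hc : ‖u x‖ ^ 2 + ∑ i ∈ G, ‖u i‖ ^ 2 ≤ ‖u x + ∑ i ∈ G, η i • u i‖ ^ 2
      · refine ⟨Function.update η x 1, updp _ _ _ h3 (Or.inl rfl), ?_⟩
        rw [Finset.sum_insert hx, Finset.sum_insert hx, upd _ _ _ _ hx]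
        simpa using hc
      · refine ⟨Function.update η x (-1), updp _ _ _ h3 (Or.inr rfl), ?_⟩
        rw [Finset.sum_insert hx, Finset.sum_insert hx, upd _ _ _ _ hx]
        simp only [Function.update_self, neg_smul, one_smul]
        rw [← norm_neg (-u x + _), neg_add, neg_neg, ← sub_eq_add_neg]
        push Not at hc
        nlinarith

lemma forward (lam : ℕ → ℂ × ℂ) (hlam : ∀ i, lam i ∈ Bidisk)
    (h : ∀ w : ℕ → ℂ, (∃ Cw : ℝ, ∀ i, ‖w i‖ ≤ Cw) →
      ∃ φ : ℂ × ℂ → ℂ, DifferentiableOn ℂ φ Bidisk ∧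
        (∃ Cφ : ℝ, ∀ z ∈ Bidisk, ‖φ z‖ ≤ Cφ) ∧
        ∀ i, φ (lam i) = w i) :
    ∃ M > (0:ℝ), ∃ Nc > (0:ℝ),
      ∀ k : ℂ × ℂ → ℂ × ℂ → ℂ, IsAdmissibleKernel k → (∀ i, 0 < k (lam i) (lam i)) →
        ∀ (F : Finset ℕ) (a : ℕ → ℂ),
          ((((1 / Nc) * ∑ i ∈ F, ‖a i‖ ^ 2 : ℝ) : ℂ) ≤
              ∑ i ∈ F, ∑ j ∈ F, a i * starRingEnd ℂ (a j) *
                (k (lam i) (lam j) /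
                  (Real.sqrt ((k (lam i) (lam i)).re * (k (lam j) (lam j)).re) : ℂ))) ∧
          (∑ i ∈ F, ∑ j ∈ F, a i * starRingEnd ℂ (a j) *
              (k (lam i) (lam j) /
                (Real.sqrt ((k (lam i) (lam i)).re * (k (lam j) (lam j)).re) : ℂ)) ≤
            ((M * ∑ i ∈ F, ‖a i‖ ^ 2 : ℝ) : ℂ)) := by
  obtain ⟨B, hB, hgood⟩ := goodMul_uniform lam (fun w hw => by
    obtain ⟨φ, hφ, ⟨C, hC⟩, hw'⟩ := h w hw
    exact ⟨C, goodMul_of_interp lam hlam w φ hφ C hC hw'⟩)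
  refine ⟨B ^ 2, by positivity, B ^ 2, by positivity, fun k hk hpos F a => ?_⟩
  obtain ⟨H, _, _, _, v, hv⟩ := (hk.1.psd lam hlam).gram
  have hv' : ∀ i j, inner ℂ (v j) (v i) = k (lam i) (lam j) := hv
  have hne := gram_ne_zero hv' hpos
  rw [normalized_gram hv']
  let b : ℕ → ℂ := fun i => a i / (‖v i‖ : ℂ)
  have hbn : ∑ i ∈ F, ‖b i • v i‖ ^ 2 = ∑ i ∈ F, ‖a i‖ ^ 2 := by
    refine Finset.sum_congr rfl fun i _ => ?_
    have := hne i
    simp only [b]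
    rw [norm_smul, norm_div, Complex.norm_real, norm_norm, div_mul_cancel₀ _ this]
  have sgn1 : ∀ ε : ℕ → ℂ, (∀ i, ε i = 1 ∨ ε i = -1) → ∀ i, ‖ε i‖ ≤ 1 := by
    intro ε hε i
    rcases hε i with h | h <;> simp [h]
  obtain ⟨⟨ε, h1, h2⟩, ⟨η, h3, h4⟩⟩ := signs (fun i => b i • v i) F
  have g1 := hgood ε (sgn1 ε h1) k hk H _ _ v hv' F (fun i => b i * ε i)
  have g2 := hgood η (sgn1 η h3) k hk H _ _ v hv' F b
  have q1 : ∑ i ∈ F, (b i * ε i * ε i) • v i = ∑ i ∈ F, b i • v i := by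
    refine Finset.sum_congr rfl fun i _ => ?_
    rcases h1 i with h | h <;> simp [h]
  have q2 : ∀ ε : ℕ → ℂ, ∑ i ∈ F, (b i * ε i) • v i = ∑ i ∈ F, ε i • b i • v i := by
    intro ε
    refine Finset.sum_congr rfl fun i _ => ?_
    rw [smul_smul, mul_comm]
  rw [q1, q2] at g1
  rw [q2] at g2
  rw [hbn] at h2 h4
  constructor
  · rw [Complex.real_le_real, one_div, inv_mul_le_iff₀ (by positivity)]
    refine h4.trans ?_
    rw [← mul_pow]
    exact pow_le_pow_left₀ (norm_nonneg _) g2 2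
  · rw [Complex.real_le_real]
    refine (pow_le_pow_left₀ (norm_nonneg _) g1 2).trans ?_
    rw [mul_pow]
    gcongr

/-- **Interpolating sequences for `H^∞(𝔻²)` (Agler–McCarthy).** A sequence of distinct
points of `𝔻²` is interpolating if and only if the normalized Grammians of all admissible
kernels are uniformly bounded above and uniformly bounded below. -/
theorem interpolating_iff_grammians_bounded (lam : ℕ → ℂ × ℂ)
    (hlam : ∀ i, lam i ∈ Bidisk) (hdist : Function.Injective lam) :
    (∀ w : ℕ → ℂ, (∃ Cw : ℝ, ∀ i, ‖w i‖ ≤ Cw) →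
      ∃ φ : ℂ × ℂ → ℂ, DifferentiableOn ℂ φ Bidisk ∧
        (∃ Cφ : ℝ, ∀ z ∈ Bidisk, ‖φ z‖ ≤ Cφ) ∧
        ∀ i, φ (lam i) = w i) ↔
    ∃ M > (0:ℝ), ∃ Nc > (0:ℝ),
      ∀ k : ℂ × ℂ → ℂ × ℂ → ℂ, IsAdmissibleKernel k → (∀ i, 0 < k (lam i) (lam i)) →
        ∀ (F : Finset ℕ) (a : ℕ → ℂ),
          ((((1 / Nc) * ∑ i ∈ F, ‖a i‖ ^ 2 : ℝ) : ℂ) ≤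
              ∑ i ∈ F, ∑ j ∈ F, a i * starRingEnd ℂ (a j) *
                (k (lam i) (lam j) /
                  (Real.sqrt ((k (lam i) (lam i)).re * (k (lam j) (lam j)).re) : ℂ))) ∧
          (∑ i ∈ F, ∑ j ∈ F, a i * starRingEnd ℂ (a j) *
              (k (lam i) (lam j) /
                (Real.sqrt ((k (lam i) (lam i)).re * (k (lam j) (lam j)).re) : ℂ)) ≤
            ((M * ∑ i ∈ F, ‖a i‖ ^ 2 : ℝ) : ℂ)) := by
  constructor
  · exact forward lam hlam
  · rintro ⟨M, hM, Nc, hN, h⟩ w hw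
    exact backward lam hlam hdist M hM Nc hN h w hw
end

section
/- (Toeplitz-corona theorem on the disk) Let φ₁,…,φ_N be bounded analytic functions on 𝔻 and let δ > 0. The following are equivalent: (i) the function (ζ,λ) ↦ [∑_{i=1}^N φ_i(ζ) \overline{φ_i(λ)} − δ] / (1 − ζ λ̄) is positive semi-definite on 𝔻 × 𝔻; (ii) there exist bounded analytic functions ψ₁,…,ψ_N on 𝔻 such that ∑_{i=1}^N ψ_i(λ) φ_i(λ) = 1 for all λ ∈ 𝔻 and sup_{λ∈𝔻} ∑_{i=1}^N |ψ_i(λ)|² ≤ 1/δ. -/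
open Finset Metric
open scoped ComplexOrder

/-- A kernel on the unit disk is positive semi-definite if all its finite Gram sums over
points of `𝔻` are nonnegative. -/
def IsPSDKernelDisk (F : ℂ → ℂ → ℂ) : Prop :=
  ∀ (n : ℕ) (mu : Fin n → ℂ), (∀ i, mu i ∈ ball (0 : ℂ) 1) → ∀ a : Fin n → ℂ,
    0 ≤ ∑ i, ∑ j, a i * starRingEnd ℂ (a j) * F (mu i) (mu j)

lemma tc_repro {n : ℕ} (mu : Fin n → ℂ) (hmu : ∀ i, mu i ∈ ball (0 : ℂ) 1) (b : Fin n → ℂ)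
    (u : ℂ → ℂ) (hu : DiffContOnCl ℂ u (ball (0 : ℂ) 1)) :
    Real.circleAverage (fun z => u z * starRingEnd ℂ
      (∑ i, starRingEnd ℂ (b i) * (1 / (1 - z * starRingEnd ℂ (mu i))))) 0 1
      = ∑ i, b i * u (mu i) := by
  have hne : ∀ i, ∀ z ∈ sphere (0 : ℂ) 1, z - mu i ≠ 0 := by
    intro i z hz h
    have h1 := hmu i
    rw [sub_eq_zero] at h
    rw [← h] at h1
    simp at hz h1
    linarith
  have key : Set.EqOn (fun z => u z * starRingEnd ℂ
      (∑ i, starRingEnd ℂ (b i) * (1 / (1 - z * starRingEnd ℂ (mu i)))))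
      (fun z => ∑ i, b i • (((z - 0) / (z - mu i)) • u z)) (sphere 0 |1|) := by
    intro z hz
    rw [abs_one] at hz
    simp only [map_sum, map_mul, map_div₀, map_one, map_sub, Complex.conj_conj, Finset.mul_sum,
      smul_eq_mul, sub_zero]
    refine Finset.sum_congr rfl fun i _ => ?_
    have hz0 : z ≠ 0 := by
      rintro rfl
      simp at hz
    have hzz : starRingEnd ℂ z = z⁻¹ := by
      have h2 : z * starRingEnd ℂ z = 1 := by
        rw [Complex.mul_conj, Complex.normSq_eq_norm_sq]
        simp at hz
        simp [hz]
      exact eq_inv_of_mul_eq_one_right h2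
    have := hne i z hz
    rw [hzz]
    have h3 : 1 - z⁻¹ * mu i = (z - mu i) / z := by field_simp
    rw [h3]
    field_simp
  rw [Real.circleAverage_congr_sphere key]
  rw [Real.circleAverage_fun_sum]
  · refine Finset.sum_congr rfl fun i _ => ?_
    rw [Real.circleAverage_fun_smul, smul_eq_mul]
    congr 1
    apply DiffContOnCl.circleAverage_smul_div (by simpa using hu) (by simpa using hmu i)
  · intro i _
    apply ContinuousOn.circleIntegrable'
    have huc : ContinuousOn u (sphere 0 |1|) := by
      apply hu.continuousOn.mono
      rw [closure_ball _ one_ne_zero, abs_one]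
      exact sphere_subset_closedBall
    have h4 : ∀ z ∈ sphere (0:ℂ) |1|, z - mu i ≠ 0 := by
      intro z hz
      exact hne i z (by simpa using hz)
    simp only [smul_eq_mul, sub_zero]
    fun_prop (disch := assumption)

lemma tc_den {z w : ℂ} (hz : z ∈ closedBall (0 : ℂ) 1) (hw : w ∈ ball (0 : ℂ) 1) :
    1 - z * starRingEnd ℂ w ≠ 0 := by
  intro h
  have h1 : z * starRingEnd ℂ w = 1 := by linear_combination -h
  have h2 : ‖z‖ * ‖w‖ = 1 := by
    have := congrArg norm h1
    simpa using this
  simp at hz hw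
  nlinarith [norm_nonneg z, norm_nonneg w]

lemma tc_ker_diff {n : ℕ} (mu : Fin n → ℂ) (hmu : ∀ i, mu i ∈ ball (0 : ℂ) 1) (b : Fin n → ℂ) :
    DifferentiableOn ℂ (fun z => ∑ i, starRingEnd ℂ (b i) * (1 / (1 - z * starRingEnd ℂ (mu i))))
      (closedBall 0 1) := by
  have h : ∀ i, ∀ z ∈ closedBall (0:ℂ) 1, 1 - z * starRingEnd ℂ (mu i) ≠ 0 :=
    fun i z hz => tc_den hz (hmu i)
  refine DifferentiableOn.fun_sum fun i _ => ?_
  have := h i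
  fun_prop (disch := assumption)

lemma tc_easy {N n : ℕ} (δ : ℝ) (hδ : 0 < δ) (ψ : Fin N → ℂ → ℂ)
    (hψ : ∀ l, DifferentiableOn ℂ (ψ l) (closedBall (0 : ℂ) 1))
    (hb : ∀ z ∈ closedBall (0 : ℂ) 1, ∑ l, ‖ψ l z‖ ^ 2 ≤ 1 / δ)
    (mu : Fin n → ℂ) (hmu : ∀ i, mu i ∈ ball (0 : ℂ) 1) (b : Fin N → Fin n → ℂ) :
    0 ≤ ((∑ l, ∑ i, b l i * ∑ j, starRingEnd ℂ (b l j) * (1 / (1 - mu i * starRingEnd ℂ (mu j))))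
      - δ * ∑ i, (∑ l, ψ l (mu i) * b l i) *
        ∑ j, starRingEnd ℂ (∑ l, ψ l (mu j) * b l j) *
          (1 / (1 - mu i * starRingEnd ℂ (mu j)))).re := by
  set c : Fin n → ℂ := fun i => ∑ l, ψ l (mu i) * b l i with hc
  set K : (Fin n → ℂ) → ℂ → ℂ := fun b z =>
    ∑ i, starRingEnd ℂ (b i) * (1 / (1 - z * starRingEnd ℂ (mu i))) with hK
  have hKd : ∀ b, DifferentiableOn ℂ (K b) (closedBall 0 1) := fun b => tc_ker_diff mu hmu b
  have hcl : closure (ball (0:ℂ) 1) = closedBall 0 1 := closure_ball _ one_ne_zero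
  have hrep : ∀ (b : Fin n → ℂ) (u : ℂ → ℂ), DifferentiableOn ℂ u (closedBall 0 1) →
      Real.circleAverage (fun z => u z * starRingEnd ℂ (K b z)) 0 1 = ∑ i, b i * u (mu i) :=
    fun b u hu => tc_repro mu hmu b u (DifferentiableOn.diffContOnCl (by rwa [hcl]))
  have hint : ∀ (b : Fin n → ℂ) (u : ℂ → ℂ), DifferentiableOn ℂ u (closedBall 0 1) →
      CircleIntegrable (fun z => u z * starRingEnd ℂ (K b z)) 0 1 := by
    intro b u hu
    apply ContinuousOn.circleIntegrable'
    have hs : sphere (0:ℂ) |1| ⊆ closedBall 0 1 := by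
      rw [abs_one]; exact sphere_subset_closedBall
    exact (hu.continuousOn.mono hs).mul
      (Complex.continuous_conj.comp_continuousOn ((hKd b).continuousOn.mono hs))
  -- the nonnegative function
  set Q : ℂ → ℂ := fun z => (∑ l, K (b l) z * starRingEnd ℂ (K (b l) z))
    - (2 * δ : ℂ) • (∑ l, (ψ l z * K c z) * starRingEnd ℂ (K (b l) z))
    + (δ : ℂ) • (K c z * starRingEnd ℂ (K c z)) with hQ
  have hi1 : CircleIntegrable (fun z => ∑ l, K (b l) z * starRingEnd ℂ (K (b l) z)) 0 1 :=
    CircleIntegrable.fun_sum _ fun l _ => hint _ _ (hKd _)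
  have hi2 : CircleIntegrable (fun z => ∑ l, (ψ l z * K c z) * starRingEnd ℂ (K (b l) z)) 0 1 :=
    CircleIntegrable.fun_sum _ fun l _ => hint _ (fun z => ψ l z * K c z) ((hψ l).mul (hKd c))
  have hi3 : CircleIntegrable (fun z => K c z * starRingEnd ℂ (K c z)) 0 1 := hint _ _ (hKd c)
  have hi2' : CircleIntegrable (fun z => (2 * δ : ℂ) •
    ∑ l, (ψ l z * K c z) * starRingEnd ℂ (K (b l) z)) 0 1 := hi2.const_fun_smul
  have hi3' : CircleIntegrable (fun z => (δ : ℂ) • (K c z * starRingEnd ℂ (K c z))) 0 1 :=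
    hi3.const_fun_smul
  have hQi : CircleIntegrable Q 0 1 := (hi1.sub hi2').add hi3'
  have hS : ∑ l, ∑ i, b l i * (ψ l (mu i) * K c (mu i)) = ∑ i, c i * K c (mu i) := by
    rw [Finset.sum_comm]
    refine Finset.sum_congr rfl fun i _ => ?_
    simp only [hc, Finset.sum_mul]
    exact Finset.sum_congr rfl fun l _ => by ring
  have hav : Real.circleAverage Q 0 1 =
      (∑ l, ∑ i, b l i * K (b l) (mu i)) - δ * ∑ i, c i * K c (mu i) := by
    simp only [hQ]
    have hi12 : CircleIntegrable (fun z => (∑ l, K (b l) z * starRingEnd ℂ (K (b l) z))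
      - (2 * δ : ℂ) • (∑ l, (ψ l z * K c z) * starRingEnd ℂ (K (b l) z))) 0 1 := hi1.sub hi2'
    rw [Real.circleAverage_fun_add hi12 hi3', Real.circleAverage_fun_sub hi1 hi2',
      Real.circleAverage_fun_smul, Real.circleAverage_fun_smul, hrep c _ (hKd c),
      Real.circleAverage_fun_sum (fun l _ => hint _ _ (hKd _)),
      Real.circleAverage_fun_sum
        (fun l _ => hint _ (fun z => ψ l z * K c z) ((hψ l).mul (hKd c)))]
    simp only [hrep _ _ (hKd _)]
    have : ∀ l, Real.circleAverage (fun z => ψ l z * K c z * starRingEnd ℂ (K (b l) z)) 0 1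
        = ∑ i, b l i * (ψ l (mu i) * K c (mu i)) :=
      fun l => hrep (b l) (fun z => ψ l z * K c z) ((hψ l).mul (hKd c))
    simp only [this, hS, smul_eq_mul]
    ring
  rw [← hav]
  have hre : (Real.circleAverage Q 0 1).re = Real.circleAverage (fun z => (Q z).re) 0 1 := by
    have := ContinuousLinearMap.circleAverage_comp_comm Complex.reCLM hQi
    simpa [Function.comp_def] using this.symm
  rw [hre]
  apply Real.circleAverage_nonneg_of_nonneg
  intro z hz
  have hz' : z ∈ closedBall (0:ℂ) 1 := by
    rw [abs_one] at hz; exact sphere_subset_closedBall hz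
  have hbz := hb z hz'
  have hpt : ∀ l, 0 ≤ ‖K (b l) z‖ ^ 2 - 2 * δ * ((ψ l z * K c z) * starRingEnd ℂ (K (b l) z)).re
      + δ ^ 2 * ‖ψ l z‖ ^ 2 * ‖K c z‖ ^ 2 := by
    intro l
    have h1 : 0 ≤ ‖K (b l) z - δ * (ψ l z * K c z)‖ ^ 2 := by positivity
    have h3 : ‖K (b l) z - δ * (ψ l z * K c z)‖ ^ 2 = ‖K (b l) z‖ ^ 2
      - 2 * δ * ((ψ l z * K c z) * starRingEnd ℂ (K (b l) z)).re
      + δ ^ 2 * ‖ψ l z‖ ^ 2 * ‖K c z‖ ^ 2 := by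
      rw [mul_assoc (δ^2), ← mul_pow, ← norm_mul]
      generalize ψ l z * K c z = y
      simp only [← Complex.normSq_eq_norm_sq, Complex.normSq_apply]
      simp
      ring
    linarith
  have hsum := Finset.sum_nonneg fun l (_ : l ∈ Finset.univ) => hpt l
  rw [Finset.sum_add_distrib, Finset.sum_sub_distrib, ← Finset.mul_sum, ← Finset.sum_mul,
    ← Finset.mul_sum, ← Complex.re_sum] at hsum
  have hQz : (Q z).re = ∑ l, ‖K (b l) z‖ ^ 2
    - 2 * δ * (∑ l, (ψ l z * K c z) * starRingEnd ℂ (K (b l) z)).re + δ * ‖K c z‖ ^ 2 := by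
    simp only [hQ, smul_eq_mul, Complex.mul_conj, Complex.normSq_eq_norm_sq]
    simp [-Complex.re_sum, -Complex.ofReal_pow, ← Complex.ofReal_sum]
  rw [hQz]
  have h5 : δ ^ 2 * (∑ l, ‖ψ l z‖ ^ 2) * ‖K c z‖ ^ 2 ≤ δ * ‖K c z‖ ^ 2 := by
    apply mul_le_mul_of_nonneg_right _ (by positivity)
    calc δ ^ 2 * (∑ l, ‖ψ l z‖ ^ 2) ≤ δ ^ 2 * (1 / δ) := by gcongr
      _ = δ := by field_simp
  linarith

lemma tc_easy' {N n : ℕ} (δ : ℝ) (hδ : 0 < δ) (ψ : Fin N → ℂ → ℂ)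
    (hψ : ∀ l, DifferentiableOn ℂ (ψ l) (ball (0 : ℂ) 1))
    (hb : ∀ z ∈ ball (0 : ℂ) 1, ∑ l, ‖ψ l z‖ ^ 2 ≤ 1 / δ)
    (mu : Fin n → ℂ) (hmu : ∀ i, mu i ∈ ball (0 : ℂ) 1) (b : Fin N → Fin n → ℂ) :
    0 ≤ ((∑ l, ∑ i, b l i * ∑ j, starRingEnd ℂ (b l j) * (1 / (1 - mu i * starRingEnd ℂ (mu j))))
      - δ * ∑ i, (∑ l, ψ l (mu i) * b l i) *
        ∑ j, starRingEnd ℂ (∑ l, ψ l (mu j) * b l j) *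
          (1 / (1 - mu i * starRingEnd ℂ (mu j)))).re := by
  have ht : ∀ l i, Filter.Tendsto (fun r : ℝ => ψ l (r * mu i)) (nhdsWithin 1 (Set.Iio 1))
      (nhds (ψ l (mu i))) := by
    intro l i
    have h1 : ContinuousAt (ψ l) ((1 : ℝ) * mu i) := by
      simpa using ((hψ l).continuousOn.continuousAt (isOpen_ball.mem_nhds (hmu i)))
    have h2 : ContinuousAt (fun r : ℝ => (r : ℂ) * mu i) 1 := by fun_prop
    have h3 : ContinuousAt (fun r : ℝ => ψ l (r * mu i)) 1 :=
      ContinuousAt.comp (f := fun r : ℝ => (r : ℂ) * mu i) (g := ψ l) h1 h2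
    have h4 := h3.tendsto
    simp only [Complex.ofReal_one, one_mul] at h4
    exact h4.mono_left nhdsWithin_le_nhds
  have hc : ∀ i, Filter.Tendsto (fun r : ℝ => ∑ l, ψ l (r * mu i) * b l i)
      (nhdsWithin 1 (Set.Iio 1)) (nhds (∑ l, ψ l (mu i) * b l i)) := fun i =>
    tendsto_finsetSum _ fun l _ => (ht l i).mul_const _
  refine ge_of_tendsto (x := nhdsWithin (1:ℝ) (Set.Iio 1)) (f := fun r : ℝ =>
    ((∑ l, ∑ i, b l i * ∑ j, starRingEnd ℂ (b l j) * (1 / (1 - mu i * starRingEnd ℂ (mu j))))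
      - δ * ∑ i, (∑ l, ψ l (r * mu i) * b l i) *
        ∑ j, starRingEnd ℂ (∑ l, ψ l (r * mu j) * b l j) *
          (1 / (1 - mu i * starRingEnd ℂ (mu j)))).re) ?_ ?_
  · refine (Complex.continuous_re.tendsto _).comp ?_
    refine tendsto_const_nhds.sub (Filter.Tendsto.const_mul _ ?_)
    refine tendsto_finsetSum _ fun i _ => (hc i).mul (tendsto_finsetSum _ fun j _ => ?_)
    exact ((Complex.continuous_conj.tendsto _).comp (hc j)).mul_const _
  · have h01 : ∀ᶠ r : ℝ in nhdsWithin 1 (Set.Iio 1), 0 < r :=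
      nhdsWithin_le_nhds (lt_mem_nhds one_pos)
    filter_upwards [h01, self_mem_nhdsWithin] with r hr0 hr1
    have hmap : ∀ z ∈ closedBall (0:ℂ) 1, (r : ℂ) * z ∈ ball (0:ℂ) 1 := by
      intro z hz
      simp at hz hr1 ⊢
      rw [abs_of_pos hr0]
      nlinarith
    refine tc_easy δ hδ (fun l z => ψ l (r * z)) (fun l => ?_) (fun z hz => hb _ (hmap z hz))
      mu hmu b
    exact (hψ l).comp (by fun_prop) hmap

lemma tc_contr {X H₁ H₂ : Type*} [NormedAddCommGroup H₁] [InnerProductSpace ℂ H₁]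
    [CompleteSpace H₁] [NormedAddCommGroup H₂] [InnerProductSpace ℂ H₂] [CompleteSpace H₂]
    (u : X → H₁) (v : X → H₂) (huv : ∀ x y, inner ℂ (u x) (u y) = inner ℂ (v x) (v y)) :
    ∃ T : H₁ →L[ℂ] H₂, (∀ x, ‖T x‖ ≤ ‖x‖) ∧ ∀ x, T (u x) = v x := by
  set U : (X →₀ ℂ) →ₗ[ℂ] H₁ := Finsupp.linearCombination ℂ u with hU
  set V : (X →₀ ℂ) →ₗ[ℂ] H₂ := Finsupp.linearCombination ℂ v with hV
  have hnorm : ∀ x, ‖V x‖ = ‖U x‖ := by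
    intro x
    have h : inner ℂ (V x) (V x) = inner ℂ (U x) (U x) := by
      simp only [hU, hV, Finsupp.linearCombination_apply, Finsupp.sum_inner, Finsupp.inner_sum,
        inner_smul_left, inner_smul_right, huv]
    rw [inner_self_eq_norm_sq_to_K, inner_self_eq_norm_sq_to_K] at h
    have h' : ‖V x‖ ^ 2 = ‖U x‖ ^ 2 := by exact_mod_cast h
    exact (pow_left_inj₀ (norm_nonneg _) (norm_nonneg _) two_ne_zero).1 h'
  set S : Submodule ℂ H₁ := (LinearMap.range U).topologicalClosure with hS
  have : CompleteSpace S := (LinearMap.range U).isClosed_topologicalClosure.completeSpace_coe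
  set e : (X →₀ ℂ) →ₗ[ℂ] S := U.codRestrict S
    (fun x => (LinearMap.range U).le_topologicalClosure ⟨x, rfl⟩) with he
  have hdense : DenseRange e := by
    intro y
    rw [closure_subtype]
    have h1 : ((↑) '' Set.range e : Set H₁) = (LinearMap.range U : Set H₁) := by
      ext z
      constructor
      · rintro ⟨_, ⟨x, rfl⟩, rfl⟩
        exact ⟨x, rfl⟩
      · rintro ⟨x, rfl⟩
        exact ⟨e x, ⟨x, rfl⟩, rfl⟩
    rw [h1]
    exact y.2
  have hb : ∀ x, ‖V x‖ ≤ 1 * ‖e x‖ := by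
    intro x
    rw [one_mul, hnorm]
    exact le_rfl
  refine ⟨(V.extendOfNorm e).comp S.orthogonalProjectionOnto, fun x => ?_, fun x => ?_⟩
  · calc ‖V.extendOfNorm e (S.orthogonalProjectionOnto x)‖
        ≤ 1 * ‖S.orthogonalProjectionOnto x‖ := LinearMap.norm_extendOfNorm_apply_le hdense 1 hb _
      _ ≤ ‖x‖ := by rw [one_mul]; exact S.norm_orthogonalProjectionOnto_apply_le x
  · have h1 : u x = (e (Finsupp.single x 1) : S) := by simp [he, hU]
    rw [h1, ContinuousLinearMap.comp_apply, Submodule.orthogonalProjectionOnto_mem_subspace_eq_self,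
      LinearMap.extendOfNorm_eq hdense ⟨1, hb⟩]
    simp [hV]

lemma tc_gram {X : Type} (k : X → X → ℂ) (hk : ∀ x y, starRingEnd ℂ (k x y) = k y x)
    (hpos : ∀ f : X →₀ ℂ, 0 ≤ (f.sum fun x w => f.sum fun x' w' =>
      starRingEnd ℂ w * w' * k x x').re) :
    ∃ (E : Type) (_ : NormedAddCommGroup E) (_ : InnerProductSpace ℂ E) (_ : CompleteSpace E)
      (g : X → E), ∀ x y, inner ℂ (g x) (g y) = k x y := by
  set K : Matrix X X (ℂ →L[ℂ] ℂ) := fun x y => k x y • ContinuousLinearMap.id ℂ ℂ with hK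
  have hKp : K.PosSemidef := by
    have htf := (RKHS.posSemidef_tfae (K := K)).out 0 2
    rw [htf]
    refine ⟨?_, fun f => ?_⟩
    · ext x y
      refine ext_inner_right ℂ fun w => ?_
      simp only [Matrix.conjTranspose_apply, ContinuousLinearMap.star_eq_adjoint,
        ContinuousLinearMap.adjoint_inner_left]
      simp [hK, hk, mul_comm]
    · have h0 := hpos f
      have h1 : (f.sum fun x w => f.sum fun x' w' => inner ℂ (K x' x w) w') =
          f.sum fun x w => f.sum fun x' w' => starRingEnd ℂ w * w' * k x x' := by
        simp only [Finsupp.sum]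
        refine Finset.sum_congr rfl fun x _ => ?_
        refine Finset.sum_congr rfl fun y _ => ?_
        simp [hK, hk]
        ring
      rw [h1]
      exact h0
  have : Fact K.PosSemidef := ⟨hKp⟩
  refine ⟨RKHS.OfKernel K, inferInstance, inferInstance, inferInstance,
    fun x => RKHS.kerFun (RKHS.OfKernel K) x 1, fun x y => ?_⟩
  rw [← RKHS.kernel_inner, RKHS.OfKernel.kernel_ofKernel]
  simp [hK, hk]

lemma tc_real {N : ℕ} {E : Type} [NormedAddCommGroup E] [InnerProductSpace ℂ E] [CompleteSpace E]
    (T : WithLp 2 (EuclideanSpace ℂ (Fin N) × E) →L[ℂ] WithLp 2 (ℂ × E))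
    (hT : ∀ x, ‖T x‖ ≤ ‖x‖) :
    ∃ W : Fin N → ℂ → ℂ, (∀ i, DifferentiableOn ℂ (W i) (ball (0 : ℂ) 1)) ∧
      (∀ z ∈ ball (0 : ℂ) 1, ∑ i, ‖W i z‖ ^ 2 ≤ 1) ∧
      (∀ z ∈ ball (0 : ℂ) 1, ∀ (x : EuclideanSpace ℂ (Fin N)) (g : E) (w : ℂ),
        T (WithLp.toLp 2 (x, z • g)) = WithLp.toLp 2 (w, g) → ∑ i, W i z * x i = w) := by
  set in1 : EuclideanSpace ℂ (Fin N) →L[ℂ] WithLp 2 (EuclideanSpace ℂ (Fin N) × E) :=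
    (WithLp.prodContinuousLinearEquiv 2 ℂ (EuclideanSpace ℂ (Fin N)) E).symm.toContinuousLinearMap.comp
      (ContinuousLinearMap.inl ℂ _ _) with hin1
  set in2 : E →L[ℂ] WithLp 2 (EuclideanSpace ℂ (Fin N) × E) :=
    (WithLp.prodContinuousLinearEquiv 2 ℂ (EuclideanSpace ℂ (Fin N)) E).symm.toContinuousLinearMap.comp
      (ContinuousLinearMap.inr ℂ _ _) with hin2
  set A := (WithLp.fstL 2 ℂ ℂ E).comp (T.comp in1) with hA
  set B := (WithLp.fstL 2 ℂ ℂ E).comp (T.comp in2) with hB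
  set C := (WithLp.sndL 2 ℂ ℂ E).comp (T.comp in1) with hC
  set D := (WithLp.sndL 2 ℂ ℂ E).comp (T.comp in2) with hD
  have hdec : ∀ (x : EuclideanSpace ℂ (Fin N)) (y : E),
      T (WithLp.toLp 2 (x, y)) = WithLp.toLp 2 (A x + B y, C x + D y) := by
    intro x y
    have h1 : WithLp.toLp 2 (x, y) = in1 x + in2 y := by
      have : (x, y) = (x, 0) + (0, y) := by simp
      rw [this, WithLp.toLp_add]
      rfl
    rw [h1, map_add]
    rfl
  have hDn : ‖D‖ ≤ 1 := by
    refine D.opNorm_le_bound zero_le_one fun y => ?_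
    have h1 : D y = (T (in2 y)).snd := rfl
    have h2 : ‖(T (in2 y)).snd‖ ≤ ‖T (in2 y)‖ := by
      have := WithLp.prod_norm_sq_eq_of_L2 (T (in2 y))
      refine (sq_le_sq₀ (norm_nonneg _) (norm_nonneg _)).1 ?_
      nlinarith [sq_nonneg ‖(T (in2 y)).fst‖]
    have h3 : ‖in2 y‖ = ‖y‖ := by
      have h4 := WithLp.prod_norm_sq_eq_of_L2 (in2 y)
      have h5 : (in2 y).fst = 0 := rfl
      have h6 : (in2 y).snd = y := rfl
      rw [h5, h6] at h4
      simpa using h4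
    rw [h1, one_mul, ← h3]
    exact h2.trans (hT _)
  have hunit : ∀ z ∈ ball (0:ℂ) 1, IsUnit (1 - z • D) := by
    intro z hz
    apply isUnit_one_sub_of_norm_lt_one
    rw [norm_smul]
    simp at hz
    nlinarith [norm_nonneg z, norm_nonneg D]
  set R : ℂ → E →L[ℂ] E := fun z => Ring.inverse (1 - z • D) with hR
  have hR1 : ∀ z ∈ ball (0:ℂ) 1, ∀ y, R z y - z • D (R z y) = y := by
    intro z hz y
    have h := Ring.mul_inverse_cancel _ (hunit z hz)
    have h' := congrArg (fun L : E →L[ℂ] E => L y) h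
    simpa using h'
  have hR2 : ∀ z ∈ ball (0:ℂ) 1, ∀ y, R z (y - z • D y) = y := by
    intro z hz y
    have h := Ring.inverse_mul_cancel _ (hunit z hz)
    have h' := congrArg (fun L : E →L[ℂ] E => L y) h
    simpa using h'
  set W : Fin N → ℂ → ℂ := fun i z => A (EuclideanSpace.single i 1) +
    z * B (R z (C (EuclideanSpace.single i 1))) with hW
  have hsum : ∀ z (x : EuclideanSpace ℂ (Fin N)), ∑ i, W i z * x i = A x + z * B (R z (C x)) := by
    intro z x
    set L : EuclideanSpace ℂ (Fin N) →L[ℂ] ℂ := A + z • (B.comp ((R z).comp C)) with hL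
    have h1 : ∀ y, L y = A y + z * B (R z (C y)) := fun y => by simp [hL]
    have hx : x = ∑ i, x i • EuclideanSpace.single i (1:ℂ) := by
      ext j
      simp [Finset.sum_apply, Pi.single_apply]
    rw [← h1]
    conv_rhs => rw [hx]
    rw [map_sum]
    refine Finset.sum_congr rfl fun i _ => ?_
    rw [map_smul, h1, smul_eq_mul, mul_comm]
  refine ⟨W, fun i => ?_, fun z hz => ?_, fun z hz x g w h => ?_⟩
  · have hRd : DifferentiableOn ℂ R (ball 0 1) := by
      intro z hz
      apply DifferentiableAt.differentiableWithinAt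
      have h1 : DifferentiableAt ℂ (fun z : ℂ => (1 : E →L[ℂ] E) - z • D) z := by fun_prop
      exact DifferentiableAt.comp (f := fun z : ℂ => (1 : E →L[ℂ] E) - z • D)
        (g := Ring.inverse) z (differentiableAt_inverse (hunit z hz)) h1
    have h2 : DifferentiableOn ℂ (fun z => R z (C (EuclideanSpace.single i 1))) (ball 0 1) :=
      hRd.clm_apply (differentiableOn_const _)
    have h3 : DifferentiableOn ℂ (fun z => B (R z (C (EuclideanSpace.single i 1)))) (ball 0 1) :=
      B.differentiable.comp_differentiableOn h2
    exact (differentiableOn_const _).add (differentiableOn_id.mul h3)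
  · set x : EuclideanSpace ℂ (Fin N) := WithLp.toLp 2 fun i => starRingEnd ℂ (W i z) with hx
    set y := R z (C x) with hy
    have h1 : T (WithLp.toLp 2 (x, z • y)) = WithLp.toLp 2 (∑ i, W i z * x i, y) := by
      rw [hdec, hsum, map_smul, map_smul, smul_eq_mul]
      have := hR1 z hz (C x)
      rw [← hy] at this
      rw [← hy]
      congr 2
      rw [← this]
      abel
    have h2 := hT (WithLp.toLp 2 (x, z • y))
    rw [h1] at h2
    have h3 := pow_le_pow_left₀ (norm_nonneg _) h2 2
    rw [WithLp.prod_norm_sq_eq_of_L2, WithLp.prod_norm_sq_eq_of_L2] at h3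
    simp only [WithLp.toLp_fst, WithLp.toLp_snd, norm_smul, mul_pow] at h3
    have h4 : ∑ i, W i z * x i = ((∑ i, ‖W i z‖ ^ 2 : ℝ) : ℂ) := by
      push_cast
      refine Finset.sum_congr rfl fun i _ => ?_
      simp [hx, Complex.mul_conj, Complex.normSq_eq_norm_sq]
    have h5 : ‖x‖ ^ 2 = ∑ i, ‖W i z‖ ^ 2 := by
      rw [EuclideanSpace.norm_sq_eq]
      simp [hx]
    rw [h4, h5, Complex.norm_real, Real.norm_eq_abs, sq_abs] at h3
    simp at hz
    have h6 : ‖z‖ ^ 2 * ‖y‖ ^ 2 ≤ ‖y‖ ^ 2 := by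
      have : ‖z‖ ^ 2 ≤ 1 := by nlinarith [norm_nonneg z]
      nlinarith [sq_nonneg ‖y‖]
    have h7 : (∑ i, ‖W i z‖ ^ 2) ^ 2 ≤ ∑ i, ‖W i z‖ ^ 2 := by linarith
    generalize ∑ i, ‖W i z‖ ^ 2 = q at h7 ⊢
    clear_value W R A B C D x y in1 in2
    clear * - h7
    nlinarith
  · rw [hdec] at h
    have h1 : A x + B (z • g) = w := congrArg WithLp.fst h
    have h2 : C x + D (z • g) = g := congrArg WithLp.snd h
    have h3 : R z (C x) = g := by
      rw [← hR2 z hz g]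
      congr 1
      rw [map_smul] at h2
      rw [eq_sub_iff_add_eq, h2]
    rw [hsum, h3, ← h1, map_smul, smul_eq_mul]

/-- **Toeplitz-corona theorem on the disk.** For bounded analytic `φ₁, …, φ_N` on `𝔻` and
`δ > 0`, the kernel `(ζ,λ) ↦ [∑ᵢ φᵢ(ζ)φᵢ(λ)~ - δ]/(1 - ζλ̄)` is positive semi-definite if
and only if there are analytic `ψ₁, …, ψ_N` on `𝔻` with `∑ᵢ ψᵢφᵢ = 1` and
`sup_𝔻 ∑ᵢ |ψᵢ|² ≤ 1/δ`. -/
theorem toeplitz_corona_disk {N : ℕ} (φ : Fin N → ℂ → ℂ)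
    (hφ : ∀ i, DifferentiableOn ℂ (φ i) (ball (0 : ℂ) 1))
    (hφb : ∀ i, ∃ C : ℝ, ∀ z ∈ ball (0 : ℂ) 1, ‖φ i z‖ ≤ C)
    (δ : ℝ) (hδ : 0 < δ) :
    IsPSDKernelDisk (fun zeta lam =>
      ((∑ i, φ i zeta * starRingEnd ℂ (φ i lam)) - (δ : ℂ)) /
        (1 - zeta * starRingEnd ℂ lam)) ↔
    ∃ ψ : Fin N → ℂ → ℂ,
      (∀ i, DifferentiableOn ℂ (ψ i) (ball (0 : ℂ) 1)) ∧
      (∀ z ∈ ball (0 : ℂ) 1, ∑ i, ψ i z * φ i z = 1) ∧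
      (∀ z ∈ ball (0 : ℂ) 1, ∑ i, ‖ψ i z‖ ^ 2 ≤ 1 / δ) := by
  constructor
  · intro hpsd
    set k : ball (0 : ℂ) 1 → ball (0 : ℂ) 1 → ℂ := fun x y =>
      ((∑ i, φ i y * starRingEnd ℂ (φ i x)) - (δ : ℂ)) / (1 - y * starRingEnd ℂ (x : ℂ)) with hk
    have hsymm : ∀ x y, starRingEnd ℂ (k x y) = k y x := by
      intro x y
      simp only [hk, map_div₀, map_sub, map_sum, map_mul, Complex.conj_conj, Complex.conj_ofReal,
        map_one]
      congr 2
      · exact Finset.sum_congr rfl fun i _ => mul_comm _ _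
      · exact mul_comm _ _
    have hpos : ∀ f : ball (0 : ℂ) 1 →₀ ℂ, 0 ≤ (f.sum fun x w => f.sum fun x' w' =>
        starRingEnd ℂ w * w' * k x x').re := by
      intro f
      let e := f.support.equivFin
      have h := hpsd _ (fun i => ((e.symm i : ball (0 : ℂ) 1) : ℂ)) (fun i => (e.symm i).1.2)
        (fun i => f (e.symm i))
      have h' := (Complex.nonneg_iff.1 h).1
      convert h' using 2
      have hconv : ∀ F : ball (0 : ℂ) 1 → ℂ,
          ∑ i, F (e.symm i) = ∑ x ∈ f.support, F x := by
        intro F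
        rw [Equiv.sum_comp e.symm (fun x : f.support => F x), Finset.sum_coe_sort]
      simp only [Finsupp.sum]
      rw [Finset.sum_comm, ← hconv]
      refine Finset.sum_congr rfl fun i _ => ?_
      rw [← hconv]
      refine Finset.sum_congr rfl fun j _ => ?_
      simp only [hk]
      ring
    obtain ⟨E, _, _, _, g, hg⟩ := tc_gram k hsymm hpos
    set u : ball (0 : ℂ) 1 → WithLp 2 (EuclideanSpace ℂ (Fin N) × E) := fun x =>
      WithLp.toLp 2 (WithLp.toLp 2 (fun i => φ i x), (x : ℂ) • g x) with hu
    set v : ball (0 : ℂ) 1 → WithLp 2 (ℂ × E) := fun x =>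
      WithLp.toLp 2 ((Real.sqrt δ : ℂ), g x) with hv
    have hs : (Real.sqrt δ : ℂ) * (Real.sqrt δ : ℂ) = δ := by
      rw [← Complex.ofReal_mul, Real.mul_self_sqrt hδ.le]
    have hs0 : (Real.sqrt δ : ℂ) ≠ 0 := by
      have := (Real.sqrt_pos.2 hδ).ne'
      exact_mod_cast this
    obtain ⟨T, hT, hTu⟩ := tc_contr u v (by
      intro x y
      simp only [hu, hv, WithLp.prod_inner_apply, inner_smul_left, inner_smul_right, hg]
      have hne := tc_den (ball_subset_closedBall y.2) x.2
      have h1 : k x y * (1 - y * starRingEnd ℂ (x : ℂ)) =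
          (∑ i, φ i y * starRingEnd ℂ (φ i x)) - (δ : ℂ) := by
        simp only [hk]
        rw [div_mul_cancel₀ _ hne]
      have h2 : inner ℂ (WithLp.toLp 2 (fun i => φ i x) : EuclideanSpace ℂ (Fin N))
          (WithLp.toLp 2 (fun i => φ i y)) = ∑ i, φ i y * starRingEnd ℂ (φ i x) := by
        simp [PiLp.inner_apply]
      have h3 : inner ℂ (Real.sqrt δ : ℂ) (Real.sqrt δ : ℂ) = (δ : ℂ) := by
        rw [RCLike.inner_apply, Complex.conj_ofReal, hs]
      rw [h2, h3]
      linear_combination -h1)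
    obtain ⟨W, hWd, hWb, hW⟩ := tc_real T hT
    refine ⟨fun i z => (Real.sqrt δ : ℂ)⁻¹ * W i z, fun i => (hWd i).const_mul _,
      fun z hz => ?_, fun z hz => ?_⟩
    · have h := hW z hz _ _ _ (hTu ⟨z, hz⟩)
      simp only [mul_assoc]
      rw [← Finset.mul_sum]
      simp only at h
      rw [h, inv_mul_cancel₀ hs0]
    · simp only [norm_mul, mul_pow]
      rw [← Finset.mul_sum]
      have h1 : ‖(Real.sqrt δ : ℂ)⁻¹‖ ^ 2 = 1 / δ := by
        rw [norm_inv, Complex.norm_real, Real.norm_eq_abs, inv_pow, sq_abs, Real.sq_sqrt hδ.le,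
          one_div]
      rw [h1]
      exact mul_le_of_le_one_right (by positivity) (hWb z hz)
  · rintro ⟨ψ, hψ, h1, hψb⟩ n mu hmu a
    have h := tc_easy' δ hδ ψ hψ hψb mu hmu (fun l i => a i * φ l (mu i))
    have hc : ∀ i, ∑ l, ψ l (mu i) * (a i * φ l (mu i)) = a i := by
      intro i
      have : ∑ l, ψ l (mu i) * (a i * φ l (mu i)) = a i * ∑ l, ψ l (mu i) * φ l (mu i) := by
        rw [Finset.mul_sum]
        exact Finset.sum_congr rfl fun l _ => by ring
      rw [this, h1 _ (hmu i), mul_one]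
    simp only [hc] at h
    rw [Complex.nonneg_iff]
    constructor
    · convert h using 2
      simp only [Finset.mul_sum]
      rw [Finset.sum_comm (s := (Finset.univ : Finset (Fin N))), ← Finset.sum_sub_distrib]
      refine Finset.sum_congr rfl fun i _ => ?_
      rw [Finset.sum_comm (s := (Finset.univ : Finset (Fin N))), ← Finset.sum_sub_distrib]
      refine Finset.sum_congr rfl fun j _ => ?_
      rw [sub_div, mul_sub, Finset.sum_div, Finset.mul_sum]
      congr 1
      · refine Finset.sum_congr rfl fun l _ => ?_
        simp only [map_mul]
        ring
      · ring
    · symm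
      rw [← Complex.conj_eq_iff_im]
      simp only [map_sum]
      rw [Finset.sum_comm]
      refine Finset.sum_congr rfl fun i _ => Finset.sum_congr rfl fun j _ => ?_
      simp only [map_div₀, map_sub, map_sum, map_mul, Complex.conj_conj, Complex.conj_ofReal,
        map_one]
      have e1 : ∑ l, starRingEnd ℂ (φ l (mu j)) * φ l (mu i) =
          ∑ l, φ l (mu i) * starRingEnd ℂ (φ l (mu j)) :=
        Finset.sum_congr rfl fun l _ => mul_comm _ _
      rw [e1]
      ring
end
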